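/- arXiv:2210.08526 — 2 statements merged into one kernel-verified Lean document; each statement's English description precedes it below -/
import Mathlib

section
/- Let A_n be the random skew-symmetric matrix model with α-balanced entries. For every finite abelian group G, lim_{n→∞} E(#Sur(cok(A_n), G)) = |Sym² G|, where #Sur(X, G) is the number of surjective group homomorphisms from X to G. -/
/-!
A surjection from `cok A` to `G` is a generating tuple `f : Fin n → G` with `∑ i, A i j • f i = 0`
for every `j`. Write `q = |G|` and `Ĝ` for the Pontryagin dual. Detecting these equations with
characters and using independence of the entries, the probability that `f` satisfies them is
`q⁻ⁿ ∑_C ∏_{i<j} φ(ω(hᵢ, hⱼ))`, where `C` runs over `Ĝⁿ`, `hᵢ = (fᵢ, Cᵢ)` lies in `H = G × Ĝ`, `ω` is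
the standard symplectic pairing on `H`, and `φ(a) = E[e(ξ a)]` (`prob_eq`, `expectation_eq`).

*Main term.* If all `ω(hᵢ, hⱼ)` vanish, the product is `1`. For a generating `f`, such `C` correspond
to symmetric bilinear pairings on `G`, that is, to characters of `Sym² G`, so there are `|Sym² G|` of
them (`card_symmetric`). The proportion of generating tuples tends to `1` (`tendsto_generating`).

*Error term.* Balancedness gives `|φ(a)| < 1` for `a ≠ 0` (`norm_phi_lt_one`), hence a uniform bound
over the finitely many values of `ω`. It remains to see that `q⁻ⁿ` times the sum, over the words
`h ∈ Hⁿ` with some `ω(hᵢ, hⱼ) ≠ 0`, of `c ^ #{(i, j) : ω(hᵢ, hⱼ) ≠ 0}` tends to `0` (`comb_limit`).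
Let `T` be the set of letters occurring at least `d ≈ n / K` times.
* If two letters of `T` are not orthogonal, the weight is at most `c ^ (d²)`, which beats `|H|ⁿ`.
* If `|T| < q`, the word has few letters outside `T`, and there are exponentially fewer than `qⁿ`
  such words once `K` is large.
* Otherwise `T` is isotropic with at least `q` elements, and since `|H| = q²` it has exactly `q`
  elements and equals its own orthogonal complement (`omega_isotropic`). Each letter outside `T` then
  costs a factor `c ^ d`, and at least one letter lies outside, so these words contribute at most
  `(1 + |H| c ^ d)ⁿ - 1`, which tends to `0`.
-/

open MeasureTheory Filter
open scoped TensorProduct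

noncomputable section

def IsBalanced (α : ℝ) (μ : Measure ℤ) : Prop :=
  ∀ p : ℕ, p.Prime → ∀ r : ZMod p, μ {x : ℤ | (x : ZMod p) = r} ≤ ENNReal.ofReal (1 - α)

def skewMatrix (n : ℕ) (x : Fin n × Fin n → ℤ) : Matrix (Fin n) (Fin n) ℤ :=
  Matrix.of fun i j => if i < j then x (i, j) else if j < i then -x (j, i) else 0

abbrev cok (n : ℕ) (M : Matrix (Fin n) (Fin n) ℤ) :=
  (Fin n → ℤ) ⧸ LinearMap.range (Matrix.toLin' M)

def matMeasure (μ : Measure ℤ) (hμ : IsProbabilityMeasure μ) (n : ℕ) :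
    Measure (Fin n × Fin n → ℤ) :=
  haveI := hμ
  Measure.pi fun _ => μ

/-- `Sym² G`: the quotient of `G ⊗ G` by the subgroup generated by the elements
`g₁ ⊗ g₂ − g₂ ⊗ g₁`. -/
abbrev symSq (G : Type) [AddCommGroup G] :=
  (G ⊗[ℤ] G) ⧸
    AddSubgroup.closure {x : G ⊗[ℤ] G | ∃ g₁ g₂ : G, x = g₁ ⊗ₜ[ℤ] g₂ - g₂ ⊗ₜ[ℤ] g₁}

/-! ### The combinatorial estimate for words -/

/-- Bound on the weight of one word `h`, each non-`R` pair of positions costing a factor `c`. The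
three summands dominate, respectively, words having two frequent letters (at least `d` occurrences)
not related by `R`, words with fewer than `q` frequent letters, and words whose frequent letters form
a set as in `hR`. In the third, the subtracted product removes the words written entirely in `T`. -/
lemma pointwise_bound {H : Type*} [Fintype H] [DecidableEq H] (R : H → H → Prop)
    [DecidableRel R] (q : ℕ)
    (hR : ∀ T : Finset H, q ≤ T.card → (∀ s ∈ T, ∀ t ∈ T, R s t) →
      T.card = q ∧ ∀ h ∉ T, ∃ t ∈ T, ¬ R h t)
    {c y : ℝ} (hc0 : 0 < c) (hc1 : c < 1) (hy0 : 0 < y) (hy1 : y ≤ 1) (n d : ℕ)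
    (h : Fin n → H) (hbad : ∃ i j, ¬ R (h i) (h j)) :
    (∏ i, ∏ j, if R (h i) (h j) then (1 : ℝ) else c) ≤
      c ^ (d * d)
      + ∑ T : Finset H with T.card < q,
          (y⁻¹) ^ (Fintype.card H * d) * ∏ i, (if h i ∈ T then 1 else y)
      + ∑ T : Finset H with T.card = q,
          ((∏ i, (if h i ∈ T then 1 else c ^ d)) - ∏ i, (if h i ∈ T then (1 : ℝ) else 0)) := by
  have hw0 : ∀ a b, 0 ≤ (if R a b then (1 : ℝ) else c) := by
    intro a b; split_ifs <;> linarith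
  have hw1 : ∀ a b, (if R a b then (1 : ℝ) else c) ≤ 1 := by
    intro a b; split_ifs <;> linarith
  have hcol : ∀ a t, ¬ R a t → d ≤ (Finset.univ.filter fun j => h j = t).card →
      (∏ j, if R a (h j) then (1 : ℝ) else c) ≤ c ^ d := by
    intro a t hat hd
    calc (∏ j, if R a (h j) then (1 : ℝ) else c)
        ≤ ∏ j, (if h j = t then c else 1) := by
          apply Finset.prod_le_prod
          · intro j _; exact hw0 _ _
          · intro j _
            split_ifs with h1 h2 h2
            · subst h2; exact absurd h1 hat
            · exact le_rfl
            · exact le_rfl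
            · exact hc1.le
      _ = c ^ (Finset.univ.filter fun j => h j = t).card := by
          rw [Finset.prod_ite]; simp
      _ ≤ c ^ d := pow_le_pow_of_le_one hc0.le hc1.le hd
  have hrow1 : ∀ a, (∏ j, if R a (h j) then (1 : ℝ) else c) ≤ 1 := fun a =>
    Finset.prod_le_one (fun j _ => hw0 _ _) (fun j _ => hw1 _ _)
  have hrow0 : ∀ a, 0 ≤ (∏ j, if R a (h j) then (1 : ℝ) else c) := fun a =>
    Finset.prod_nonneg (fun j _ => hw0 _ _)
  have hprod01 : ∀ (T : Finset H) (z : ℝ), 0 ≤ z →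
      0 ≤ ∏ i, (if h i ∈ T then (1 : ℝ) else z) := by
    intro T z hz
    apply Finset.prod_nonneg
    intro i _; split_ifs <;> linarith
  have hB0 : ∀ T : Finset H, 0 ≤ (y⁻¹) ^ (Fintype.card H * d) *
      ∏ i, (if h i ∈ T then (1 : ℝ) else y) := fun T =>
    mul_nonneg (by positivity) (hprod01 T y hy0.le)
  have hC0 : ∀ T : Finset H, 0 ≤ ((∏ i, (if h i ∈ T then (1 : ℝ) else c ^ d)) -
      ∏ i, (if h i ∈ T then (1 : ℝ) else 0)) := by
    intro T
    rw [sub_nonneg]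
    apply Finset.prod_le_prod
    · intro i _; split_ifs <;> norm_num
    · intro i _; split_ifs
      · exact le_rfl
      · positivity
  have hA0 : 0 ≤ c ^ (d * d) := by positivity
  have hBs : 0 ≤ ∑ T : Finset H with T.card < q,
          (y⁻¹) ^ (Fintype.card H * d) * ∏ i, (if h i ∈ T then 1 else y) :=
    Finset.sum_nonneg fun T _ => hB0 T
  have hCs : 0 ≤ ∑ T : Finset H with T.card = q,
          ((∏ i, (if h i ∈ T then 1 else c ^ d)) - ∏ i, (if h i ∈ T then (1 : ℝ) else 0)) :=
    Finset.sum_nonneg fun T _ => hC0 T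
  set T : Finset H := Finset.univ.filter
    fun t => d ≤ (Finset.univ.filter fun j => h j = t).card with hT
  have hTmem : ∀ t, t ∈ T ↔ d ≤ (Finset.univ.filter fun j => h j = t).card := by
    intro t; simp [hT]
  by_cases horth : ∀ s ∈ T, ∀ t ∈ T, R s t
  · by_cases hcard : T.card < q
    · have h1 : (Finset.univ.filter fun i => h i ∉ T).card ≤ Fintype.card H * d := by
        rw [Finset.card_eq_sum_card_fiberwise (f := h) (t := Finset.univ) (fun _ _ => by simp)]
        calc _ ≤ ∑ _t : H, d := by
              apply Finset.sum_le_sum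
              intro t _
              by_cases ht : t ∈ T
              · rw [Finset.card_eq_zero.mpr]
                · exact Nat.zero_le _
                · ext i; simp; rintro h1 rfl; exact h1 ht
              · have := mt (hTmem t).2 ht
                refine le_trans (Finset.card_le_card ?_) (not_le.mp this).le
                intro i; simp
          _ = _ := by simp
      have h2 : ∏ i, (if h i ∈ T then (1 : ℝ) else y)
          = y ^ (Finset.univ.filter fun i => h i ∉ T).card := by
        rw [Finset.prod_ite]; simp
      have h3 : (1 : ℝ) ≤ (y⁻¹) ^ (Fintype.card H * d) *
          ∏ i, (if h i ∈ T then (1 : ℝ) else y) := by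
        rw [h2, inv_pow, ← div_eq_inv_mul, one_le_div (by positivity)]
        exact pow_le_pow_of_le_one hy0.le hy1 h1
      have h4 := Finset.single_le_sum (f := fun T : Finset H => (y⁻¹) ^ (Fintype.card H * d) *
          ∏ i, (if h i ∈ T then (1 : ℝ) else y)) (s := Finset.univ.filter
          fun T : Finset H => T.card < q) (fun T _ => hB0 T) (a := T) (by simpa using hcard)
      have h5 : (∏ i, ∏ j, if R (h i) (h j) then (1 : ℝ) else c) ≤ 1 :=
        Finset.prod_le_one (fun i _ => hrow0 _) (fun i _ => hrow1 _)
      linarith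
    · obtain ⟨hTq, hout⟩ := hR T (not_lt.mp hcard) horth
      have h1 : (∏ i, ∏ j, if R (h i) (h j) then (1 : ℝ) else c) ≤
          ∏ i, (if h i ∈ T then (1 : ℝ) else c ^ d) := by
        apply Finset.prod_le_prod
        · intro i _; exact hrow0 _
        · intro i _
          split_ifs with hi
          · exact hrow1 _
          · obtain ⟨t, ht, hit⟩ := hout _ hi
            exact hcol _ t hit ((hTmem t).1 ht)
      have h2 : ∏ i, (if h i ∈ T then (1 : ℝ) else 0) = 0 := by
        obtain ⟨i, j, hij⟩ := hbad
        have : h i ∉ T ∨ h j ∉ T := by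
          by_contra! hcon
          exact hij (horth _ hcon.1 _ hcon.2)
        rcases this with hi | hi
        · exact Finset.prod_eq_zero (Finset.mem_univ i) (by simp [hi])
        · exact Finset.prod_eq_zero (Finset.mem_univ j) (by simp [hi])
      have h4 := Finset.single_le_sum (f := fun T : Finset H =>
          ((∏ i, (if h i ∈ T then (1 : ℝ) else c ^ d)) - ∏ i, (if h i ∈ T then (1 : ℝ) else 0)))
          (s := Finset.univ.filter
          fun T : Finset H => T.card = q) (fun T _ => hC0 T) (a := T) (by simpa using hTq)
      linarith
  · push Not at horth
    obtain ⟨s, hs, t, ht, hst⟩ := horth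
    have h1 : (∏ i, ∏ j, if R (h i) (h j) then (1 : ℝ) else c) ≤ c ^ (d * d) := by
      calc (∏ i, ∏ j, if R (h i) (h j) then (1 : ℝ) else c)
          ≤ ∏ i, (if h i = s then c ^ d else 1) := by
            apply Finset.prod_le_prod
            · intro i _; exact hrow0 _
            · intro i _
              split_ifs with hi
              · rw [hi]; exact hcol _ t hst ((hTmem t).1 ht)
              · exact hrow1 _
        _ = (c ^ d) ^ (Finset.univ.filter fun j => h j = s).card := by
            rw [Finset.prod_ite]; simp
        _ ≤ (c ^ d) ^ d := pow_le_pow_of_le_one (by positivity)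
            (pow_le_one₀ hc0.le hc1.le) ((hTmem s).1 hs)
        _ = _ := by rw [pow_mul]
    linarith

/-- Sum of `pointwise_bound` over all words, with `y = 1 / (2|H|)`: then an alphabet `T` with
`|T| < q` has total letter weight at most `(q - 1) + 1/2 = q (1 - 1/(2q))`. -/
lemma total_bound {H : Type*} [Fintype H] [DecidableEq H] [Nonempty H] (R : H → H → Prop)
    [DecidableRel R] (q : ℕ) (hq : 0 < q)
    (hR : ∀ T : Finset H, q ≤ T.card → (∀ s ∈ T, ∀ t ∈ T, R s t) →
      T.card = q ∧ ∀ h ∉ T, ∃ t ∈ T, ¬ R h t)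
    {c : ℝ} (hc0 : 0 < c) (hc1 : c < 1) (n d : ℕ) :
    (∑ h : Fin n → H with ∃ i j, ¬ R (h i) (h j),
      ∏ i, ∏ j, if R (h i) (h j) then (1 : ℝ) else c) ≤
      q ^ n * ((Fintype.card H : ℝ) ^ n * c ^ (d * d)
      + 2 ^ (Fintype.card H) * ((2 * Fintype.card H : ℝ) ^ Fintype.card H) ^ d
          * (1 - (2 * q : ℝ)⁻¹) ^ n
      + 2 ^ (Fintype.card H) * ((1 + Fintype.card H * c ^ d) ^ n - 1)) := by
  set M := Fintype.card H with hM
  have hM1 : 1 ≤ M := Fintype.card_pos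
  have hM1' : (1 : ℝ) ≤ M := by exact_mod_cast hM1
  have hq1 : (1 : ℝ) ≤ q := by exact_mod_cast hq
  set y : ℝ := (2 * M : ℝ)⁻¹ with hy
  have hy0 : 0 < y := by positivity
  have hy1 : y ≤ 1 := inv_le_one_of_one_le₀ (by linarith)
  have hsum : ∀ (T : Finset H) (z : ℝ), (∑ h : Fin n → H, ∏ i, (if h i ∈ T then (1 : ℝ) else z))
      = (T.card + (M - T.card) * z) ^ n := by
    intro T z
    rw [← Fintype.sum_pow (fun a => if a ∈ T then (1 : ℝ) else z)]
    congr 1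
    rw [Finset.sum_ite]
    have : (Finset.univ.filter fun x => x ∉ T).card = M - T.card := by
      rw [← Finset.card_compl]; congr 1; ext; simp
    simp only [Finset.sum_const, nsmul_eq_mul, mul_one, this]
    rw [Nat.cast_sub (Finset.card_le_univ T)]
    simp [hM]
  have hcardT : ∀ p : Finset H → Prop, ∀ [DecidablePred p],
      (((Finset.univ.filter p).card : ℕ) : ℝ) ≤ 2 ^ M := by
    intro p _
    have := Finset.card_filter_le (Finset.univ : Finset (Finset H)) p
    rw [Finset.card_univ, Fintype.card_finset] at this
    exact_mod_cast this
  have hTM : ∀ T : Finset H, (T.card : ℝ) ≤ M := fun T => by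
    exact_mod_cast Finset.card_le_univ T
  calc _ ≤ ∑ h : Fin n → H with ∃ i j, ¬ R (h i) (h j), (c ^ (d * d)
      + ∑ T : Finset H with T.card < q,
          (y⁻¹) ^ (M * d) * ∏ i, (if h i ∈ T then 1 else y)
      + ∑ T : Finset H with T.card = q,
          ((∏ i, (if h i ∈ T then 1 else c ^ d)) - ∏ i, (if h i ∈ T then (1 : ℝ) else 0))) := by
        apply Finset.sum_le_sum
        intro h hh
        exact pointwise_bound R q hR hc0 hc1 hy0 hy1 n d h (by simpa using hh)
    _ ≤ ∑ h : Fin n → H, (c ^ (d * d)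
      + ∑ T : Finset H with T.card < q,
          (y⁻¹) ^ (M * d) * ∏ i, (if h i ∈ T then 1 else y)
      + ∑ T : Finset H with T.card = q,
          ((∏ i, (if h i ∈ T then 1 else c ^ d)) - ∏ i, (if h i ∈ T then (1 : ℝ) else 0))) := by
        apply Finset.sum_le_sum_of_subset_of_nonneg (Finset.filter_subset _ _)
        intro h _ _
        refine add_nonneg (add_nonneg (by positivity) (Finset.sum_nonneg fun T _ => ?_))
          (Finset.sum_nonneg fun T _ => ?_)
        · refine mul_nonneg (by positivity) (Finset.prod_nonneg fun i _ => ?_)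
          split_ifs <;> linarith
        · rw [sub_nonneg]
          apply Finset.prod_le_prod
          · intro i _; split_ifs <;> norm_num
          · intro i _; split_ifs
            · exact le_rfl
            · positivity
    _ = (M : ℝ) ^ n * c ^ (d * d)
      + ∑ T : Finset H with T.card < q, (y⁻¹) ^ (M * d) * (T.card + (M - T.card) * y) ^ n
      + ∑ T : Finset H with T.card = q,
          ((T.card + (M - T.card) * c ^ d) ^ n - (T.card : ℝ) ^ n) := by
        rw [Finset.sum_add_distrib, Finset.sum_add_distrib]
        congr 1
        · congr 1
          · simp [hM]
          · rw [Finset.sum_comm]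
            apply Finset.sum_congr rfl
            intro T _
            rw [← Finset.mul_sum, hsum]
        · rw [Finset.sum_comm]
          apply Finset.sum_congr rfl
          intro T _
          rw [Finset.sum_sub_distrib, hsum, hsum]
          simp
    _ ≤ (q : ℝ) ^ n * ((M : ℝ) ^ n * c ^ (d * d))
        + ∑ T : Finset H with T.card < q, (q : ℝ) ^ n * (((2 * M : ℝ) ^ M) ^ d
          * (1 - (2 * q : ℝ)⁻¹) ^ n)
        + ∑ T : Finset H with T.card = q, (q : ℝ) ^ n * ((1 + M * c ^ d) ^ n - 1) := by
        refine add_le_add (add_le_add ?_ (Finset.sum_le_sum fun T hT => ?_))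
          (Finset.sum_le_sum fun T hT => ?_)
        · exact le_mul_of_one_le_left (by positivity) (one_le_pow₀ hq1)
        · have hT' : (T.card : ℝ) + 1 ≤ q := by
            have : T.card < q := by simpa using hT
            exact_mod_cast this
          have hyM : y * M = 1 / 2 := by rw [hy]; field_simp
          have e1 : (T.card + (M - T.card) * y : ℝ) ≤ q * (1 - (2 * q : ℝ)⁻¹) := by
            have : (q : ℝ) * (1 - (2 * q : ℝ)⁻¹) = q - 1 / 2 := by field_simp
            rw [this]
            have : (0 : ℝ) ≤ T.card * y := by positivity
            nlinarith
          have e2 : (0 : ℝ) ≤ T.card + (M - T.card) * y := by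
            have := hTM T
            have : (0 : ℝ) ≤ (M - T.card) * y := mul_nonneg (by linarith) hy0.le
            positivity
          have e3 : (y⁻¹) ^ (M * d) = ((2 * M : ℝ) ^ M) ^ d := by
            rw [hy, inv_inv, pow_mul]
          rw [e3]
          calc _ ≤ ((2 * M : ℝ) ^ M) ^ d * (q * (1 - (2 * q : ℝ)⁻¹)) ^ n := by gcongr
            _ = _ := by rw [mul_pow (q : ℝ)]; ring
        · have hT' : T.card = q := by simpa using hT
          rw [hT', mul_sub, mul_one, ← mul_pow]
          have hqM : (q : ℝ) ≤ M := hT' ▸ hTM T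
          have hcd : 0 < c ^ d := by positivity
          refine sub_le_sub_right (pow_le_pow_left₀ ?_ ?_ n) _
          · exact add_nonneg (by positivity) (mul_nonneg (by linarith) hcd.le)
          · have : (1 : ℝ) * (M * c ^ d) ≤ q * (M * c ^ d) := by gcongr
            nlinarith
    _ ≤ (q : ℝ) ^ n * ((M : ℝ) ^ n * c ^ (d * d))
        + 2 ^ M * ((q : ℝ) ^ n * (((2 * M : ℝ) ^ M) ^ d
          * (1 - (2 * q : ℝ)⁻¹) ^ n))
        + 2 ^ M * ((q : ℝ) ^ n * ((1 + M * c ^ d) ^ n - 1)) := by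
        have hr : (0 : ℝ) ≤ 1 - (2 * q : ℝ)⁻¹ := by
          rw [sub_nonneg]; exact inv_le_one_of_one_le₀ (by linarith)
        simp only [Finset.sum_const, nsmul_eq_mul]
        gcongr
        · exact hcardT _
        · refine mul_nonneg (by positivity) (sub_nonneg.mpr ?_)
          exact one_le_pow₀ (le_add_of_nonneg_right (by positivity))
        · exact hcardT _
    _ = _ := by ring

/-- In the application `R` is orthogonality for a symplectic pairing and `hR` says that an isotropic
set of size at least `q` is its own orthogonal complement. -/
lemma comb_limit {H : Type*} [Fintype H] [DecidableEq H] [Nonempty H] (R : H → H → Prop)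
    [DecidableRel R] (q : ℕ) (hq : 0 < q)
    (hR : ∀ T : Finset H, q ≤ T.card → (∀ s ∈ T, ∀ t ∈ T, R s t) →
      T.card = q ∧ ∀ h ∉ T, ∃ t ∈ T, ¬ R h t)
    {c : ℝ} (hc0 : 0 < c) (hc1 : c < 1) :
    Tendsto (fun n : ℕ => (∑ h : Fin n → H with ∃ i j, ¬ R (h i) (h j),
      ∏ i, ∏ j, if R (h i) (h j) then (1 : ℝ) else c) / (q : ℝ) ^ n) atTop (nhds 0) := by
  set M := Fintype.card H with hM
  have hM1 : 1 ≤ M := Fintype.card_pos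
  have hM1' : (1 : ℝ) ≤ M := by exact_mod_cast hM1
  have hq1 : (1 : ℝ) ≤ q := by exact_mod_cast hq
  set r : ℝ := 1 - (2 * q : ℝ)⁻¹ with hr
  have hr0 : 0 ≤ r := by
    rw [hr, sub_nonneg]; exact inv_le_one_of_one_le₀ (by linarith)
  have hr1 : r < 1 := by
    have : 0 < (2 * q : ℝ)⁻¹ := by positivity
    linarith
  set Y : ℝ := (2 * M : ℝ) ^ M with hY
  have hY0 : 0 < Y := by positivity
  -- With `d = n / K` this makes `Y ^ d * r ^ n ≤ (Y * r ^ K) ^ d` decay.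
  obtain ⟨K₀, hK₀⟩ : ∃ K : ℕ, r ^ K < 1 / Y := exists_pow_lt_of_lt_one (by positivity) hr1
  set K := K₀ + 1 with hKdef
  have hKpos : 0 < K := Nat.succ_pos _
  have hYK : Y * r ^ K < 1 := by
    have : r ^ K ≤ r ^ K₀ := pow_le_pow_of_le_one hr0 hr1.le (Nat.le_succ _)
    have := lt_of_le_of_lt this hK₀
    rwa [lt_div_iff₀ hY0, mul_comm] at this
  let B : ℕ → ℝ := fun d => ((M : ℝ) ^ K) ^ (d + 1) * c ^ (d * d) + 2 ^ M * (Y * r ^ K) ^ d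
    + 2 ^ M * (Real.exp (K * (d + 1) * (M * c ^ d)) - 1)
  have hcpow : Tendsto (fun d : ℕ => c ^ d) atTop (nhds 0) :=
    tendsto_pow_atTop_nhds_zero_of_lt_one hc0.le hc1
  have hB1 : Tendsto (fun d : ℕ => ((M : ℝ) ^ K) ^ (d + 1) * c ^ (d * d)) atTop (nhds 0) := by
    have e : ∀ d : ℕ, ((M : ℝ) ^ K) ^ (d + 1) * c ^ (d * d)
        = (M : ℝ) ^ K * ((M : ℝ) ^ K * c ^ d) ^ d := by
      intro d; rw [mul_pow, pow_succ, ← pow_mul c]; ring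
    simp_rw [e]
    have h0 : Tendsto (fun d : ℕ => (M : ℝ) ^ K * c ^ d) atTop (nhds 0) := by
      simpa using hcpow.const_mul ((M : ℝ) ^ K)
    have h1 : ∀ᶠ d : ℕ in atTop, (M : ℝ) ^ K * c ^ d ≤ 1 / 2 :=
      h0.eventually_le_const (by norm_num)
    have h2 : Tendsto (fun d : ℕ => (M : ℝ) ^ K * (1 / 2 : ℝ) ^ d) atTop (nhds 0) := by
      simpa using (tendsto_pow_atTop_nhds_zero_of_lt_one (r := (1 / 2 : ℝ)) (by norm_num)
        (by norm_num)).const_mul ((M : ℝ) ^ K)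
    refine squeeze_zero' (Eventually.of_forall fun d => by positivity) ?_ h2
    filter_upwards [h1] with d hd
    gcongr
  have hB2 : Tendsto (fun d : ℕ => 2 ^ M * (Y * r ^ K) ^ d) atTop (nhds 0) := by
    simpa using (tendsto_pow_atTop_nhds_zero_of_lt_one (by positivity) hYK).const_mul
      ((2 : ℝ) ^ M)
  have hB3 : Tendsto (fun d : ℕ => (2 : ℝ) ^ M * (Real.exp (K * (d + 1) * (M * c ^ d)) - 1))
      atTop (nhds 0) := by
    have h0 : Tendsto (fun d : ℕ => (d : ℝ) * c ^ d) atTop (nhds 0) :=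
      tendsto_self_mul_const_pow_of_lt_one hc0.le hc1
    have h1 : Tendsto (fun d : ℕ => (K : ℝ) * (d + 1) * (M * c ^ d)) atTop (nhds 0) := by
      have := ((h0.add hcpow).const_mul ((K : ℝ) * M))
      simp only [add_zero, mul_zero] at this
      refine this.congr fun d => by ring
    have h2 := (Real.continuous_exp.tendsto 0).comp h1
    have h3 := (h2.sub_const 1).const_mul ((2 : ℝ) ^ M)
    simpa using h3
  have hB : Tendsto B atTop (nhds 0) := by
    have := (hB1.add hB2).add hB3
    simpa [B] using this
  have hd : Tendsto (fun n : ℕ => n / K) atTop atTop :=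
    Nat.tendsto_div_const_atTop hKpos.ne'
  refine squeeze_zero ?_ ?_ (hB.comp hd)
  · intro n
    refine div_nonneg (Finset.sum_nonneg fun h _ => Finset.prod_nonneg fun i _ =>
      Finset.prod_nonneg fun j _ => ?_) (by positivity)
    split_ifs <;> linarith
  · intro n
    have hqn : (0 : ℝ) < (q : ℝ) ^ n := by positivity
    rw [div_le_iff₀ hqn, mul_comm]
    refine (total_bound R q hq hR hc0 hc1 n (n / K)).trans ?_
    refine mul_le_mul_of_nonneg_left ?_ hqn.le
    simp only [Function.comp, B]
    set d := n / K with hdd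
    have hn1 : n ≤ K * (d + 1) := by
      have := Nat.lt_mul_div_succ n hKpos
      exact this.le
    have hn2 : K * d ≤ n := Nat.mul_div_le n K
    have hn1' : (n : ℝ) ≤ K * (d + 1) := by exact_mod_cast hn1
    have hcd : 0 < c ^ d := by positivity
    refine add_le_add (add_le_add ?_ ?_) ?_
    · gcongr
      rw [← pow_mul]
      exact pow_le_pow_right₀ hM1' hn1
    · rw [mul_pow Y, mul_assoc, ← pow_mul r]
      have := pow_le_pow_of_le_one hr0 hr1.le hn2
      gcongr
    · gcongr
      have h1 : 1 + (M : ℝ) * c ^ d ≤ Real.exp (M * c ^ d) := by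
        have := Real.add_one_le_exp ((M : ℝ) * c ^ d); linarith
      calc (1 + (M : ℝ) * c ^ d) ^ n ≤ Real.exp (M * c ^ d) ^ n := by gcongr
        _ = Real.exp (n * (M * c ^ d)) := (Real.exp_nat_mul _ n).symm
        _ ≤ _ := by gcongr

/-! ### Pontryagin duality and the symplectic pairing -/

/-- The Pontryagin dual of `G`, written additively so that its elements are homomorphisms of
`ℤ`-modules. -/
abbrev CDual (G : Type*) [AddCommGroup G] := G →+ Additive Circle

/-- The tautological character `Additive Circle → ℂ`. -/
def expChar : AddChar (Additive Circle) ℂ where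
  toFun a := (a.toMul : ℂ)
  map_zero_eq_one' := by simp
  map_add_eq_mul' a b := by simp

lemma expChar_apply (a : Additive Circle) : expChar a = (a.toMul : ℂ) := rfl

lemma expChar_eq_one_iff (a : Additive Circle) : expChar a = 1 ↔ a = 0 := by
  rw [expChar_apply, Circle.coe_eq_one]; rfl

lemma norm_expChar (a : Additive Circle) : ‖expChar a‖ = 1 := by
  rw [expChar_apply, Circle.norm_coe]

lemma expChar_sum {ι : Type*} (s : Finset ι) (a : ι → Additive Circle) :
    expChar (∑ i ∈ s, a i) = ∏ i ∈ s, expChar (a i) := by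
  classical
  induction s using Finset.induction_on with
  | empty => simp
  | insert i s hi ih => rw [Finset.sum_insert hi, Finset.prod_insert hi, AddChar.map_add_eq_mul, ih]

/-- Comparison with Mathlib's complex-valued characters, for finite `G`. -/
def cdualEquiv (G : Type*) [AddCommGroup G] [Finite G] : CDual G ≃ AddChar G ℂ :=
  AddChar.toAddMonoidHomEquiv.symm.trans AddChar.circleEquivComplex.toEquiv

lemma cdualEquiv_apply (G : Type*) [AddCommGroup G] [Finite G] (C : CDual G) (g : G) :
    cdualEquiv G C g = expChar (C g) := rfl

instance (G : Type*) [AddCommGroup G] [Finite G] : Finite (CDual G) :=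
  Finite.of_equiv _ (cdualEquiv G).symm

lemma card_cdual (G : Type*) [AddCommGroup G] [Finite G] : Nat.card (CDual G) = Nat.card G := by
  have := Fintype.ofFinite G
  rw [Nat.card_congr (cdualEquiv G), Nat.card_eq_fintype_card, AddChar.card_eq,
    Nat.card_eq_fintype_card]

lemma sum_cdual {G : Type*} [AddCommGroup G] [Fintype G] [Fintype (CDual G)] [DecidableEq G]
    (g : G) : ∑ C : CDual G, expChar (C g) = if g = 0 then (Fintype.card G : ℂ) else 0 := by
  rw [← AddChar.sum_apply_eq_ite, ← (cdualEquiv G).sum_comp]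
  rfl

lemma cdual_separates {G : Type*} [AddCommGroup G] [Finite G] {g : G}
    (h : ∀ C : CDual G, C g = 0) : g = 0 := by
  rw [← AddChar.forall_apply_eq_zero]
  intro ψ
  obtain ⟨C, rfl⟩ := (cdualEquiv G).surjective ψ
  rw [cdualEquiv_apply, h C]; simp

/-- The symplectic pairing `ω((g, C), (g', C')) = C' g - C g'` on `G × Ĝ`. -/
def omega (G : Type*) [AddCommGroup G] : (G × CDual G) →+ CDual (G × CDual G) :=
  AddMonoidHom.mk' (fun h => AddMonoidHom.mk' (fun h' => h'.2 h.1 - h.2 h'.1)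
    (by intro a b; simp; abel))
    (by
      intro a b
      refine AddMonoidHom.ext fun c => ?_
      simp only [AddMonoidHom.mk'_apply, AddMonoidHom.add_apply, Prod.fst_add, Prod.snd_add, map_add]
      abel)

lemma omega_apply {G : Type*} [AddCommGroup G] (h h' : G × CDual G) :
    omega G h h' = h'.2 h.1 - h.2 h'.1 := rfl

lemma omega_injective {G : Type*} [AddCommGroup G] [Finite G] :
    Function.Injective (omega G) := by
  rw [injective_iff_map_eq_zero]
  rintro ⟨g, C⟩ h
  have hg : g = 0 := cdual_separates fun D => by
    have := DFunLike.congr_fun h (0, D)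
    simpa [omega_apply] using this
  have hC : C = 0 := by
    refine AddMonoidHom.ext fun x => ?_
    have := DFunLike.congr_fun h (x, 0)
    simpa [omega_apply] using this
  simp [hg, hC]

/-- The orthogonal complement `K` of `T` embeds in the dual of the quotient by the span `L` of `T`, so
`|K| |T| ≤ |K| |L| ≤ |G|²`, while `T ⊆ K` and `|G| ≤ |T|`. -/
lemma omega_isotropic {G : Type*} [AddCommGroup G] [Finite G]
    (T : Finset (G × CDual G)) (hT : Nat.card G ≤ T.card)
    (horth : ∀ s ∈ T, ∀ t ∈ T, omega G s t = 0) :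
    T.card = Nat.card G ∧ ∀ h ∉ T, ∃ t ∈ T, omega G h t ≠ 0 := by
  set q := Nat.card G with hq
  have hq0 : 0 < q := Nat.card_pos
  let L : AddSubgroup (G × CDual G) := AddSubgroup.closure (T : Set (G × CDual G))
  let K : Set (G × CDual G) := {k | ∀ t ∈ T, omega G k t = 0}
  have hKL : ∀ k ∈ K, ∀ l ∈ L, omega G k l = 0 := by
    intro k hk
    have : L ≤ (omega G k).ker := by
      rw [AddSubgroup.closure_le]
      intro t ht
      exact hk t ht
    exact fun l hl => this hl
  have hcardK : Nat.card K ≤ Nat.card ((G × CDual G) ⧸ L) := by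
    rw [← card_cdual ((G × CDual G) ⧸ L)]
    refine Nat.card_le_card_of_injective
      (fun k : K => QuotientAddGroup.lift L (omega G k.1) (fun l hl => hKL k.1 k.2 l hl)) ?_
    intro k k' hkk
    apply Subtype.ext
    apply omega_injective
    refine AddMonoidHom.ext fun x => ?_
    exact DFunLike.congr_fun hkk (QuotientAddGroup.mk x)
  have hprod : Nat.card ((G × CDual G) ⧸ L) * Nat.card L = q * q := by
    rw [← AddSubgroup.card_eq_card_quotient_mul_card_addSubgroup, Nat.card_prod, card_cdual]
  have hTL : T.card ≤ Nat.card L := by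
    have := Nat.card_mono (Set.toFinite (L : Set (G × CDual G)))
      (AddSubgroup.subset_closure (k := (T : Set (G × CDual G))))
    simpa using this
  have hTK : (T : Set (G × CDual G)) ⊆ K := fun s hs t ht => horth s hs t ht
  have hTK' : T.card ≤ Nat.card K := by
    have := Nat.card_mono K.toFinite hTK
    simpa using this
  have hKT : Nat.card K * T.card ≤ q * q := hprod ▸ Nat.mul_le_mul hcardK hTL
  have hKq : Nat.card K ≤ q := by
    by_contra! hlt
    have : q * q < Nat.card K * T.card := Nat.mul_lt_mul_of_lt_of_le hlt hT (hq0.trans_le hT)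
    omega
  refine ⟨by omega, fun h hh => ?_⟩
  by_contra! hcon
  have hTKeq : (T : Set (G × CDual G)) = K := by
    apply Set.eq_of_subset_of_ncard_le hTK
    · rw [← Nat.card_coe_set_eq, Set.ncard_coe_finset]; omega
  have : h ∈ (T : Set (G × CDual G)) := hTKeq ▸ (fun t ht => hcon t ht : h ∈ K)
  exact hh this

/-! ### Symmetric pairings and surjections from the cokernel -/

instance (G : Type) [AddCommGroup G] [Finite G] : Finite (symSq G) := by
  have h : Finite (G ⊗[ℤ] G) := by
    have hfg : Module.Finite ℤ G := Module.Finite.of_finite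
    have hfg2 : Module.Finite ℤ (G ⊗[ℤ] G) := Module.Finite.tensorProduct ℤ G G
    refine Module.finite_of_fg_torsion _ fun {x} => ?_
    refine ⟨⟨(Nat.card G : ℤ), mem_nonZeroDivisors_of_ne_zero
      (by exact_mod_cast Nat.card_pos.ne')⟩, ?_⟩
    change (Nat.card G : ℤ) • x = 0
    induction x using TensorProduct.induction_on with
    | zero => simp
    | tmul a b =>
      rw [TensorProduct.smul_tmul', natCast_zsmul, card_nsmul_eq_zero', TensorProduct.zero_tmul]
    | add a b ha hb => rw [smul_add, ha, hb, add_zero]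
  exact Quotient.finite _

/-- A character `χ` of `Sym² G` gives the tuple `C j = χ (f j ⊗ ·)`. Conversely, a symmetric tuple
`C` defines a homomorphism from `ℤⁿ` to the dual of `G` that vanishes on the relations among the
`f i`, hence a symmetric pairing on `G`. -/
lemma card_symmetric {G : Type} [AddCommGroup G] [Finite G] {n : ℕ} (f : Fin n → G)
    (hf : Function.Surjective (Fintype.linearCombination ℤ f)) :
    Nat.card {C : Fin n → CDual G // ∀ i j, C j (f i) = C i (f j)} = Nat.card (symSq G) := by
  rw [← card_cdual (symSq G)]
  symm
  have hsymm : ∀ a b : G, (QuotientAddGroup.mk (a ⊗ₜ[ℤ] b) : symSq G)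
      = QuotientAddGroup.mk (b ⊗ₜ[ℤ] a) := by
    intro a b
    rw [QuotientAddGroup.eq]
    refine AddSubgroup.subset_closure ⟨b, a, by abel⟩
  let Φ : CDual (symSq G) → {C : Fin n → CDual G // ∀ i j, C j (f i) = C i (f j)} :=
    fun χ => ⟨fun j => AddMonoidHom.mk'
      (fun g => χ (QuotientAddGroup.mk (f j ⊗ₜ[ℤ] g)))
      (by intro a b; rw [TensorProduct.tmul_add, QuotientAddGroup.mk_add, map_add]),
      by intro i j; simp only [AddMonoidHom.mk'_apply]; rw [hsymm]⟩
  refine Nat.card_congr (Equiv.ofBijective Φ ⟨?_, ?_⟩)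
  · intro χ χ' h
    have h1 : ∀ j g, χ (QuotientAddGroup.mk (f j ⊗ₜ[ℤ] g))
        = χ' (QuotientAddGroup.mk (f j ⊗ₜ[ℤ] g)) := by
      intro j g
      exact DFunLike.congr_fun (congrFun (congrArg Subtype.val h) j) g
    have h2 : ∀ a g : G, χ (QuotientAddGroup.mk (a ⊗ₜ[ℤ] g))
        = χ' (QuotientAddGroup.mk (a ⊗ₜ[ℤ] g)) := by
      intro a g
      obtain ⟨v, rfl⟩ := hf a
      rw [Fintype.linearCombination_apply, TensorProduct.sum_tmul]
      let m := QuotientAddGroup.mk' (AddSubgroup.closure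
        {x : G ⊗[ℤ] G | ∃ g₁ g₂ : G, x = g₁ ⊗ₜ[ℤ] g₂ - g₂ ⊗ₜ[ℤ] g₁})
      change χ (m _) = χ' (m _)
      simp only [map_sum, ← TensorProduct.smul_tmul', map_zsmul]
      exact Finset.sum_congr rfl fun j _ => congrArg (v j • ·) (h1 j g)
    refine AddMonoidHom.ext fun x => ?_
    induction x using QuotientAddGroup.induction_on with
    | H z =>
      induction z using TensorProduct.induction_on with
      | zero => exact (map_zero χ).trans (map_zero χ').symm
      | tmul a b => exact h2 a b
      | add a b ha hb => rw [QuotientAddGroup.mk_add, map_add, map_add, ha, hb]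
  · rintro ⟨C, hC⟩
    let F := (Fintype.linearCombination ℤ f).toAddMonoidHom
    let E := (Fintype.linearCombination ℤ C).toAddMonoidHom
    have hFE : ∀ v w, E v (F w) = E w (F v) := by
      intro v w
      simp only [F, E, LinearMap.toAddMonoidHom_coe, Fintype.linearCombination_apply,
        AddMonoidHom.finsetSum_apply, map_sum, AddMonoidHom.smul_apply, map_zsmul,
        Finset.smul_sum]
      rw [Finset.sum_comm]
      refine Finset.sum_congr rfl fun i _ => Finset.sum_congr rfl fun j _ => ?_
      rw [hC i j, smul_comm]
    have hker : F.ker ≤ E.ker := by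
      intro v hv
      rw [AddMonoidHom.mem_ker] at hv ⊢
      ext g
      obtain ⟨w, rfl⟩ := hf g
      have := hFE v w
      rw [hv, map_zero] at this
      exact congrArg _ this
    let b : G →+ CDual G := F.liftOfSurjective hf ⟨E, hker⟩
    have hb : ∀ v, b (F v) = E v := fun v =>
      AddMonoidHom.liftOfRightInverse_comp_apply _ _ _ ⟨E, hker⟩ v
    have hbsymm : ∀ x y, b x y = b y x := by
      intro x y
      obtain ⟨v, rfl⟩ := hf x
      obtain ⟨w, rfl⟩ := hf y
      have h1 := hb v
      have h2 := hb w
      have h3 := hFE v w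
      rw [← h1, ← h2] at h3
      exact h3
    let t : G ⊗[ℤ] G →+ Additive Circle := TensorProduct.liftAddHom b (by
      intro r m k; rw [map_zsmul, map_zsmul]; rfl)
    have ht : ∀ x y, t (x ⊗ₜ y) = b x y := fun x y => rfl
    refine ⟨QuotientAddGroup.lift _ t ?_, ?_⟩
    · intro x hx
      suffices h : AddSubgroup.closure
        {x : G ⊗[ℤ] G | ∃ g₁ g₂ : G, x = g₁ ⊗ₜ[ℤ] g₂ - g₂ ⊗ₜ[ℤ] g₁} ≤ t.ker from h hx
      rw [AddSubgroup.closure_le]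
      rintro _ ⟨g₁, g₂, rfl⟩
      simp [ht, hbsymm g₁ g₂]
    · apply Subtype.ext
      funext j
      ext g
      have h1 := hb (Pi.single j 1)
      have h2 : F (Pi.single j 1) = f j := by
        simp [F]
      have h3 : E (Pi.single j 1) = C j := by
        simp [E]
      rw [h2, h3] at h1
      change ((t (f j ⊗ₜ g)).toMul : ℂ) = _
      rw [ht, h1]

lemma card_sur_cok {G : Type} [AddCommGroup G] {n : ℕ} (A : Matrix (Fin n) (Fin n) ℤ) :
    Nat.card {φ : cok n A →+ G // Function.Surjective φ} =
    Nat.card {f : Fin n → G // Function.Surjective (Fintype.linearCombination ℤ f) ∧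
      ∀ j, ∑ i, A i j • f i = 0} := by
  let N := LinearMap.range (Matrix.toLin' A)
  have key : ∀ f : Fin n → G, (∀ j, ∑ i, A i j • f i = 0) →
      N ≤ LinearMap.ker (Fintype.linearCombination ℤ f) := by
    rintro f hf _ ⟨v, rfl⟩
    rw [LinearMap.mem_ker, Fintype.linearCombination_apply]
    simp only [Matrix.toLin'_apply, Matrix.mulVec, dotProduct, Finset.sum_smul]
    rw [Finset.sum_comm]
    refine Finset.sum_eq_zero fun j _ => ?_
    have := congrArg (v j • ·) (hf j)
    simp only [Finset.smul_sum, smul_zero] at this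
    rw [← this]
    exact Finset.sum_congr rfl fun i _ => by rw [smul_smul, mul_comm]
  let Ψ : {f : Fin n → G // Function.Surjective (Fintype.linearCombination ℤ f) ∧
      ∀ j, ∑ i, A i j • f i = 0} → {φ : cok n A →+ G // Function.Surjective φ} := fun f =>
    ⟨(N.liftQ (Fintype.linearCombination ℤ f.1) (key f.1 f.2.2)).toAddMonoidHom, by
      intro g
      obtain ⟨v, hv⟩ := f.2.1 g
      exact ⟨N.mkQ v, by simpa using hv⟩⟩
  symm
  refine Nat.card_congr (Equiv.ofBijective Ψ ⟨?_, ?_⟩)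
  · intro f f' h
    apply Subtype.ext
    funext i
    have := DFunLike.congr_fun (congrArg Subtype.val h) (N.mkQ (Pi.single i 1))
    simpa [Ψ] using this
  · rintro ⟨φ, hφ⟩
    let f : Fin n → G := fun i => φ (N.mkQ (Pi.single i 1))
    have hlin : ∀ v, Fintype.linearCombination ℤ f v = φ (N.mkQ v) := by
      intro v
      have : Fintype.linearCombination ℤ f = φ.toIntLinearMap ∘ₗ N.mkQ := by
        apply LinearMap.pi_ext'
        intro i
        ext
        simp [f]
      rw [this]; rfl
    have h1 : Function.Surjective (Fintype.linearCombination ℤ f) := by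
      intro g
      obtain ⟨x, rfl⟩ := hφ g
      obtain ⟨v, rfl⟩ := N.mkQ_surjective x
      exact ⟨v, hlin v⟩
    have h2 : ∀ j, ∑ i, A i j • f i = 0 := by
      intro j
      have := hlin (Matrix.toLin' A (Pi.single j 1))
      rw [Submodule.mkQ_apply, (Submodule.Quotient.mk_eq_zero N).mpr ⟨_, rfl⟩, map_zero,
        Fintype.linearCombination_apply] at this
      simpa using this
    refine ⟨⟨f, h1, h2⟩, ?_⟩
    apply Subtype.ext
    ext x
    obtain ⟨v, rfl⟩ := N.mkQ_surjective x
    exact hlin v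

/-! ### Characteristic function of an entry -/

/-- The characteristic function of `μ` at a point of the circle group. -/
def phi (μ : Measure ℤ) (a : Additive Circle) : ℂ := ∫ x : ℤ, expChar (x • a) ∂μ

lemma phi_zero (μ : Measure ℤ) [IsProbabilityMeasure μ] : phi μ 0 = 1 := by
  simp [phi]

/-- By strict convexity, `‖phi μ a‖ = 1` would force `x • a` to be almost surely constant, hence `x`
to be almost surely constant modulo every prime dividing the order of `a`. -/
lemma norm_phi_lt_one {α : ℝ} (hα : 0 < α) (μ : Measure ℤ) [IsProbabilityMeasure μ]
    (hbal : IsBalanced α μ) {a : Additive Circle} (ha : a ≠ 0) : ‖phi μ a‖ < 1 := by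
  have h_le : ∀ᵐ x ∂μ, ‖expChar (x • a)‖ ≤ 1 := ae_of_all _ fun x => (norm_expChar _).le
  rcases ae_eq_const_or_norm_integral_lt_of_norm_le_const h_le with h | h
  · exfalso
    obtain ⟨x₀, hx₀⟩ := h.exists
    -- If `a` has infinite order then `p = 2` (`minFac 0`), and the argument still applies.
    set p := (addOrderOf a).minFac with hp
    have hpp : p.Prime := Nat.minFac_prime (by simpa [AddMonoid.addOrderOf_eq_one_iff] using ha)
    have h1 : ∀ᵐ x ∂μ, x ∈ {x : ℤ | (x : ZMod p) = ((x₀ : ℤ) : ZMod p)} := by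
      filter_upwards [h] with x hx
      have h2 : expChar (x • a) = expChar (x₀ • a) := hx.trans hx₀.symm
      have h3 : (x - x₀) • a = 0 := by
        rw [← expChar_eq_one_iff, sub_smul, AddChar.map_sub_eq_div, h2, div_self]
        rw [← norm_ne_zero_iff, norm_expChar]; exact one_ne_zero
      have h4 : (p : ℤ) ∣ x - x₀ := by
        refine dvd_trans ?_ (addOrderOf_dvd_iff_zsmul_eq_zero.mpr h3)
        exact_mod_cast Nat.minFac_dvd _
      have h5 := (ZMod.intCast_zmod_eq_zero_iff_dvd (x - x₀) p).mpr h4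
      simpa [sub_eq_zero] using h5
    have h6 := hbal p hpp ((x₀ : ℤ) : ZMod p)
    have h8 : μ {x : ℤ | (x : ZMod p) = ((x₀ : ℤ) : ZMod p)} = 1 :=
      (mem_ae_iff_prob_eq_one₀ (MeasurableSet.of_discrete.nullMeasurableSet)).mp h1
    rw [h8] at h6
    have h7 : ENNReal.ofReal (1 - α) < 1 := by
      rw [← ENNReal.ofReal_one]
      exact (ENNReal.ofReal_lt_ofReal_iff one_pos).mpr (by linarith)
    exact absurd h6 (not_le.mpr h7)
  · simpa [phi] using h

/-- The bound is a square because `norm_charTerm_le` spreads each pair `i < j` over the two ordered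
pairs `(i, j)` and `(j, i)`. -/
lemma exists_uniform_bound {α : ℝ} (hα : 0 < α) (μ : Measure ℤ) [IsProbabilityMeasure μ]
    (hbal : IsBalanced α μ) (G : Type) [AddCommGroup G] [Finite G] :
    ∃ c : ℝ, 0 < c ∧ c < 1 ∧
      ∀ h h' : G × CDual G, omega G h h' ≠ 0 → ‖phi μ (omega G h h')‖ ≤ c ^ 2 := by
  classical
  obtain ⟨p, hp⟩ := Finite.exists_max fun p : (G × CDual G) × (G × CDual G) =>
    if omega G p.1 p.2 = 0 then (1 / 2 : ℝ) else max ‖phi μ (omega G p.1 p.2)‖ (1 / 2)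
  set m := if omega G p.1 p.2 = 0 then (1 / 2 : ℝ) else max ‖phi μ (omega G p.1 p.2)‖ (1 / 2)
    with hm
  have hm1 : m < 1 := by
    rw [hm]; split_ifs with h
    · norm_num
    · exact max_lt (norm_phi_lt_one hα μ hbal h) (by norm_num)
  have hm0 : 0 < m := by
    rw [hm]; split_ifs with h
    · norm_num
    · exact lt_of_lt_of_le (by norm_num) (le_max_right _ _)
  refine ⟨√m, Real.sqrt_pos.mpr hm0, by rw [Real.sqrt_lt' one_pos]; simpa using hm1, ?_⟩
  intro h h' hne
  rw [Real.sq_sqrt hm0.le]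
  have := hp (h, h')
  simp only [hne, if_false] at this
  exact (le_max_left _ _).trans this

/-- The contribution of the word `h` of pairs `(f i, C i)` to the character sum. -/
def charTerm (μ : Measure ℤ) {G : Type} [AddCommGroup G] {n : ℕ} (h : Fin n → G × CDual G) : ℂ :=
  ∏ p : Fin n × Fin n, if p.1 < p.2 then phi μ (omega G (h p.1) (h p.2)) else 1

lemma norm_charTerm_le {μ : Measure ℤ} [IsProbabilityMeasure μ] {G : Type} [AddCommGroup G]
    [DecidableEq (Additive Circle)] {c : ℝ}
    (hc : ∀ h h' : G × CDual G, omega G h h' ≠ 0 → ‖phi μ (omega G h h')‖ ≤ c ^ 2)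
    {n : ℕ} (h : Fin n → G × CDual G) :
    ‖charTerm μ h‖ ≤ ∏ i, ∏ j, if omega G (h i) (h j) = 0 then (1 : ℝ) else c := by
  have hself : ∀ a : G × CDual G, omega G a a = 0 := fun a => by simp [omega_apply]
  have hanti : ∀ a b : G × CDual G, omega G a b = 0 ↔ omega G b a = 0 := fun a b => by
    simp only [omega_apply, sub_eq_zero]; exact eq_comm
  let w : Fin n → Fin n → ℝ := fun i j => if omega G (h i) (h j) = 0 then (1 : ℝ) else c
  have hws : ∀ i j, w i j = w j i := fun i j => by simp only [w, hanti (h i) (h j)]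
  have h1 : ∏ i, ∏ j, w i j = ∏ p : Fin n × Fin n, if p.1 < p.2 then w p.1 p.2 ^ 2 else 1 := by
    have e1 : ∏ i, ∏ j, w i j = ∏ i, ∏ j, ((if i < j then w i j else 1) *
        (if j < i then w i j else 1)) := by
      refine Finset.prod_congr rfl fun i _ => Finset.prod_congr rfl fun j _ => ?_
      rcases lt_trichotomy i j with hij | rfl | hij
      · simp [hij, hij.not_gt]
      · simp [w, hself]
      · simp [hij, hij.not_gt]
    have e2 : ∏ i, ∏ j, (if j < i then w i j else 1) = ∏ i, ∏ j, (if i < j then w i j else 1) := by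
      rw [Finset.prod_comm]
      refine Finset.prod_congr rfl fun i _ => Finset.prod_congr rfl fun j _ => ?_
      rw [hws j i]
    rw [e1]
    simp only [Finset.prod_mul_distrib]
    rw [e2]
    simp only [← Finset.prod_mul_distrib]
    rw [Fintype.prod_prod_type]
    refine Finset.prod_congr rfl fun i _ => Finset.prod_congr rfl fun j _ => ?_
    split_ifs <;> ring
  change _ ≤ ∏ i, ∏ j, w i j
  rw [h1, charTerm, norm_prod]
  refine Finset.prod_le_prod (fun p _ => norm_nonneg _) fun p _ => ?_
  by_cases hp : p.1 < p.2
  · simp only [hp, if_true, w]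
    split_ifs with h0
    · rw [h0, phi_zero]; simp
    · exact hc _ _ h0
  · simp [hp]

lemma charTerm_eq_one {μ : Measure ℤ} [IsProbabilityMeasure μ] {G : Type} [AddCommGroup G]
    {n : ℕ} {h : Fin n → G × CDual G} (hh : ∀ i j, omega G (h i) (h j) = 0) :
    charTerm μ h = 1 := by
  refine Finset.prod_eq_one fun p _ => ?_
  rw [hh, phi_zero]; simp

lemma skew_sum {B : Type*} [AddCommGroup B] {n : ℕ} (x : Fin n × Fin n → ℤ)
    (b : Fin n → Fin n → B) :
    ∑ j, ∑ i, skewMatrix n x i j • b i j =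
      ∑ p : Fin n × Fin n, if p.1 < p.2 then x p • (b p.1 p.2 - b p.2 p.1) else 0 := by
  have e1 : ∀ i j, skewMatrix n x i j • b i j = (if i < j then x (i, j) • b i j else 0)
      - (if j < i then x (j, i) • b i j else 0) := by
    intro i j
    rcases lt_trichotomy i j with hij | rfl | hij
    · simp [skewMatrix, hij, hij.not_gt]
    · simp [skewMatrix]
    · simp [skewMatrix, hij, hij.not_gt]
  simp only [e1, Finset.sum_sub_distrib]
  rw [Finset.sum_comm, Fintype.sum_prod_type]
  simp only [← Finset.sum_sub_distrib]
  refine Finset.sum_congr rfl fun i _ => Finset.sum_congr rfl fun j _ => ?_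
  split_ifs
  · rw [smul_sub]
  · simp

lemma integrable_of_bounded (μ : Measure ℤ) (hμ : IsProbabilityMeasure μ) {n : ℕ}
    {g : (Fin n × Fin n → ℤ) → ℂ} (K : ℝ) (hg : ∀ x, ‖g x‖ ≤ K) :
    Integrable g (matMeasure μ hμ n) := by
  have : IsProbabilityMeasure (matMeasure μ hμ n) := by
    unfold matMeasure; infer_instance
  exact Integrable.of_bound Measurable.of_discrete.aestronglyMeasurable K (ae_of_all _ hg)

/-! ### Fourier expansion of the expectation -/

/-- The probability that `f` annihilates the columns of the random skew-symmetric matrix. -/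
lemma prob_eq (μ : Measure ℤ) (hμ : IsProbabilityMeasure μ) {G : Type} [AddCommGroup G]
    [Fintype G] [Fintype (CDual G)] [DecidableEq G] {n : ℕ} (f : Fin n → G) :
    ∫ x, (if ∀ j, ∑ i, skewMatrix n x i j • f i = 0 then (1 : ℂ) else 0) ∂(matMeasure μ hμ n)
      = ((Fintype.card G : ℂ) ^ n)⁻¹ *
        ∑ C : Fin n → CDual G, charTerm μ (fun i => (f i, C i)) := by
  have hq : (Fintype.card G : ℂ) ≠ 0 := by exact_mod_cast Fintype.card_ne_zero
  have h1 : ∀ x : Fin n × Fin n → ℤ,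
      (if ∀ j, ∑ i, skewMatrix n x i j • f i = 0 then (1 : ℂ) else 0) =
      ((Fintype.card G : ℂ) ^ n)⁻¹ * ∑ C : Fin n → CDual G, ∏ p : Fin n × Fin n,
        (if p.1 < p.2 then expChar (x p • omega G (f p.1, C p.1) (f p.2, C p.2)) else 1) := by
    intro x
    have e1 : (if ∀ j, ∑ i, skewMatrix n x i j • f i = 0 then (1 : ℂ) else 0) =
        ∏ j, (Fintype.card G : ℂ)⁻¹ *
          ∑ C : CDual G, expChar (C (∑ i, skewMatrix n x i j • f i)) := by
      simp only [sum_cdual]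
      by_cases h : ∀ j, ∑ i, skewMatrix n x i j • f i = 0
      · rw [if_pos h, Finset.prod_eq_one]
        intro j _
        rw [if_pos (h j), inv_mul_cancel₀ hq]
      · rw [if_neg h]
        push Not at h
        obtain ⟨j, hj⟩ := h
        rw [Finset.prod_eq_zero (Finset.mem_univ j)]
        rw [if_neg hj, mul_zero]
    rw [e1, Finset.prod_mul_distrib, Finset.prod_const, Finset.card_univ, Fintype.card_fin,
      inv_pow, Finset.prod_univ_sum, Fintype.piFinset_univ]
    congr 1
    refine Finset.sum_congr rfl fun C _ => ?_
    simp only [map_sum, map_zsmul]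
    rw [← expChar_sum, skew_sum x (fun i j => C j (f i)), expChar_sum]
    refine Finset.prod_congr rfl fun p _ => ?_
    split_ifs
    · rfl
    · simp
  simp only [h1]
  rw [integral_const_mul, integral_finsetSum]
  · congr 1
    refine Finset.sum_congr rfl fun C _ => ?_
    unfold matMeasure
    rw [integral_fintype_prod_eq_prod (fun (p : Fin n × Fin n) (x : ℤ) =>
      (if p.1 < p.2 then expChar (x • omega G (f p.1, C p.1) (f p.2, C p.2)) else 1))]
    refine Finset.prod_congr rfl fun p _ => ?_
    split_ifs
    · rfl
    · simp
  · intro C _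
    refine integrable_of_bounded μ hμ 1 fun x => ?_
    rw [norm_prod]
    refine (Finset.prod_eq_one fun p _ => ?_).le
    split_ifs
    · exact norm_expChar _
    · simp

lemma expectation_eq (μ : Measure ℤ) (hμ : IsProbabilityMeasure μ) (G : Type) [AddCommGroup G]
    [Fintype G] [Fintype (CDual G)] (n : ℕ)
    [DecidablePred fun f : Fin n → G => Function.Surjective (Fintype.linearCombination ℤ f)] :
    ((∫ x, (Nat.card {f : cok n (skewMatrix n x) →+ G // Function.Surjective f} : ℝ)
          ∂(matMeasure μ hμ n) : ℝ) : ℂ) =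
      ((Fintype.card G : ℂ) ^ n)⁻¹ *
        ∑ f : Fin n → G with Function.Surjective (Fintype.linearCombination ℤ f),
          ∑ C : Fin n → CDual G, charTerm μ (fun i => (f i, C i)) := by
  classical
  rw [← integral_complex_ofReal]
  have h1 : ∀ x : Fin n × Fin n → ℤ,
      (((Nat.card {f : cok n (skewMatrix n x) →+ G // Function.Surjective f} : ℕ) : ℝ) : ℂ) =
      ∑ f : Fin n → G with Function.Surjective (Fintype.linearCombination ℤ f),
        if ∀ j, ∑ i, skewMatrix n x i j • f i = 0 then (1 : ℂ) else 0 := by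
    intro x
    rw [card_sur_cok, Nat.card_eq_fintype_card, Fintype.card_subtype, ← Finset.sum_filter,
      Finset.filter_filter, Finset.sum_const]
    simp
  simp only [h1]
  rw [integral_finsetSum, Finset.mul_sum]
  · exact Finset.sum_congr rfl fun f _ => prob_eq μ hμ f
  · intro f _
    refine integrable_of_bounded μ hμ 1 fun x => ?_
    split_ifs <;> simp

/-- A tuple that does not generate `G` misses some element, which happens for at most `q (q - 1)ⁿ`
tuples. -/
lemma tendsto_generating (G : Type) [AddCommGroup G] [Fintype G]
    [∀ n, DecidablePred fun f : Fin n → G =>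
      Function.Surjective (Fintype.linearCombination ℤ f)] :
    Tendsto (fun n : ℕ => ((Finset.univ.filter fun f : Fin n → G =>
      Function.Surjective (Fintype.linearCombination ℤ f)).card : ℝ) / (Fintype.card G : ℝ) ^ n)
      atTop (nhds 1) := by
  classical
  set q := Fintype.card G with hq
  have hq1 : 1 ≤ q := Fintype.card_pos
  have hq0 : (0 : ℝ) < q := by exact_mod_cast hq1
  have hlow : ∀ n : ℕ, (q : ℝ) ^ n - q * ((q : ℝ) - 1) ^ n ≤
      ((Finset.univ.filter fun f : Fin n → G =>
      Function.Surjective (Fintype.linearCombination ℤ f)).card : ℝ) := by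
    intro n
    have h1 : (Finset.univ : Finset (Fin n → G)) ⊆
        (Finset.univ.filter fun f : Fin n → G =>
          Function.Surjective (Fintype.linearCombination ℤ f)) ∪
        Finset.univ.biUnion fun g : G => Fintype.piFinset fun _ : Fin n => {g}ᶜ := by
      intro f _
      by_cases hf : ∃ g, ∀ i, f i ≠ g
      · obtain ⟨g, hg⟩ := hf
        refine Finset.mem_union_right _ (Finset.mem_biUnion.mpr ⟨g, Finset.mem_univ _, ?_⟩)
        simpa using hg
      · push Not at hf
        refine Finset.mem_union_left _ (Finset.mem_filter.mpr ⟨Finset.mem_univ _, fun g => ?_⟩)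
        obtain ⟨i, hi⟩ := hf g
        exact ⟨Pi.single i 1, by simp [hi]⟩
    have h2 := (Finset.card_le_card h1).trans (Finset.card_union_le _ _)
    have h3 : (Finset.univ.biUnion fun g : G =>
        Fintype.piFinset fun _ : Fin n => ({g}ᶜ : Finset G)).card ≤ q * (q - 1) ^ n := by
      refine Finset.card_biUnion_le.trans ?_
      simp [Finset.card_compl, hq]
    have h4 : q ^ n ≤ (Finset.univ.filter fun f : Fin n → G =>
          Function.Surjective (Fintype.linearCombination ℤ f)).card + q * (q - 1) ^ n := by
      simp only [Finset.card_univ, Fintype.card_fun, Fintype.card_fin] at h2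
      exact h2.trans (Nat.add_le_add_left h3 _)
    have h5 : (q : ℝ) ^ n ≤ ((Finset.univ.filter fun f : Fin n → G =>
          Function.Surjective (Fintype.linearCombination ℤ f)).card : ℝ)
          + q * ((q : ℝ) - 1) ^ n := by
      have : ((q - 1 : ℕ) : ℝ) = (q : ℝ) - 1 := by rw [Nat.cast_sub hq1]; simp
      rw [← this]
      exact_mod_cast h4
    linarith
  have hlim : Tendsto (fun n : ℕ => 1 - (q : ℝ) * (((q : ℝ) - 1) / q) ^ n) atTop (nhds 1) := by
    have h1 : (1 : ℝ) ≤ q := by exact_mod_cast hq1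
    have h2 : ((q : ℝ) - 1) / q < 1 := by rw [div_lt_one hq0]; linarith
    have h3 := tendsto_pow_atTop_nhds_zero_of_lt_one (div_nonneg (by linarith) hq0.le) h2
    simpa using (h3.const_mul (q : ℝ)).const_sub 1
  refine tendsto_of_tendsto_of_tendsto_of_le_of_le hlim tendsto_const_nhds ?_ ?_
  · intro n
    have hqn : (0 : ℝ) < (q : ℝ) ^ n := by positivity
    change _ ≤ _ / _
    rw [le_div_iff₀ hqn]
    refine le_trans (le_of_eq ?_) (hlow n)
    simp only [div_pow]
    field_simp
  · intro n
    have hqn : (0 : ℝ) < (q : ℝ) ^ n := by positivity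
    change _ / _ ≤ _
    rw [div_le_one hqn]
    have := Finset.card_filter_le (Finset.univ : Finset (Fin n → G)) fun f =>
      Function.Surjective (Fintype.linearCombination ℤ f)
    simp only [Finset.card_univ, Fintype.card_fun, Fintype.card_fin] at this
    exact_mod_cast this

theorem skew_cokernel_moments (α : ℝ) (hα : 0 < α)
    (μ : Measure ℤ) (hμ : IsProbabilityMeasure μ) (hbal : IsBalanced α μ)
    (G : Type) [AddCommGroup G] [Fintype G] :
    Tendsto
      (fun n : ℕ =>
        ∫ x, (Nat.card {f : cok n (skewMatrix n x) →+ G // Function.Surjective f} : ℝ)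
          ∂(matMeasure μ hμ n))
      atTop (nhds (Nat.card (symSq G) : ℝ)) := by
  classical
  have hD : Fintype (CDual G) := Fintype.ofFinite _
  obtain ⟨c, hc0, hc1, hc⟩ := exists_uniform_bound hα μ hbal G
  set q := Fintype.card G with hq
  set S := Nat.card (symSq G) with hS
  let gen : (n : ℕ) → Finset (Fin n → G) := fun n => Finset.univ.filter fun f : Fin n → G =>
      Function.Surjective (Fintype.linearCombination ℤ f)
  have herr := comb_limit (fun h h' : G × CDual G => omega G h h' = 0) q Fintype.card_pos
    (by
      intro T hT horth
      rw [hq, ← Nat.card_eq_fintype_card] at hT ⊢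
      exact omega_isotropic T hT horth) hc0 hc1
  have hmain : Tendsto (fun n : ℕ => ((gen n).card : ℝ) / (q : ℝ) ^ n * S) atTop
      (nhds (S : ℝ)) := by
    simpa using (tendsto_generating G).mul_const (S : ℝ)
  have hdiff : ∀ n : ℕ, ‖(∫ x, (Nat.card {f : cok n (skewMatrix n x) →+ G //
      Function.Surjective f} : ℝ) ∂(matMeasure μ hμ n)) - ((gen n).card : ℝ) / (q : ℝ) ^ n * S‖ ≤
      (∑ h : Fin n → G × CDual G with ∃ i j, ¬ omega G (h i) (h j) = 0,
        ∏ i, ∏ j, if omega G (h i) (h j) = 0 then (1 : ℝ) else c) / (q : ℝ) ^ n := by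
    intro n
    have hsplit : ∀ f ∈ gen n, ∑ C : Fin n → CDual G, charTerm μ (fun i => (f i, C i)) =
        (S : ℂ) + ∑ C : Fin n → CDual G, if ∃ i j, ¬ omega G (f i, C i) (f j, C j) = 0 then
          charTerm μ (fun i => (f i, C i)) else 0 := by
      intro f hf
      have hf' : Function.Surjective (Fintype.linearCombination ℤ f) := by
        simpa [gen] using hf
      rw [hS, ← card_symmetric f hf', Nat.card_eq_fintype_card, Fintype.card_subtype,
        Finset.card_filter, Nat.cast_sum, ← Finset.sum_add_distrib]
      refine Finset.sum_congr rfl fun C _ => ?_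
      by_cases hC : ∀ i j, C j (f i) = C i (f j)
      · have h0 : ∀ i j, omega G (f i, C i) (f j, C j) = 0 := fun i j => by
          rw [omega_apply, sub_eq_zero]; exact hC i j
        rw [charTerm_eq_one h0]
        simp [hC, h0]
      · have h0 : ∃ i j, ¬ omega G (f i, C i) (f j, C j) = 0 := by
          push Not at hC
          obtain ⟨i, j, hij⟩ := hC
          exact ⟨i, j, by rw [omega_apply, sub_eq_zero]; exact hij⟩
        rw [if_neg hC, if_pos h0]; simp
    have hE := expectation_eq μ hμ G n
    rw [Finset.sum_congr rfl hsplit, Finset.sum_add_distrib, Finset.sum_const, nsmul_eq_mul] at hE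
    rw [← Complex.norm_real, Complex.ofReal_sub, hE]
    have hqn : (0 : ℝ) < (q : ℝ) ^ n := by
      have : 0 < q := Fintype.card_pos
      positivity
    have e1 : ((q : ℂ) ^ n)⁻¹ * (((gen n).card : ℂ) * S + ∑ f ∈ gen n, ∑ C : Fin n → CDual G,
          if ∃ i j, ¬ omega G (f i, C i) (f j, C j) = 0 then
          charTerm μ (fun i => (f i, C i)) else 0)
        - ((((gen n).card : ℝ) / (q : ℝ) ^ n * S : ℝ) : ℂ)
        = ((q : ℂ) ^ n)⁻¹ * ∑ f ∈ gen n, ∑ C : Fin n → CDual G,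
          if ∃ i j, ¬ omega G (f i, C i) (f j, C j) = 0 then
          charTerm μ (fun i => (f i, C i)) else 0 := by
      push_cast; ring
    refine (congrArg norm e1).le.trans ?_
    rw [norm_mul, norm_inv, norm_pow, Complex.norm_natCast, ← div_eq_inv_mul]
    refine div_le_div_of_nonneg_right ?_ hqn.le
    have hw0 : ∀ h : Fin n → G × CDual G,
        0 ≤ ∏ i, ∏ j, if omega G (h i) (h j) = 0 then (1 : ℝ) else c := fun h =>
      Finset.prod_nonneg fun i _ => Finset.prod_nonneg fun j _ => by
        split_ifs <;> linarith
    calc _ ≤ ∑ f ∈ gen n, ∑ C : Fin n → CDual G,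
          if ∃ i j, ¬ omega G (f i, C i) (f j, C j) = 0 then
          ∏ i, ∏ j, (if omega G (f i, C i) (f j, C j) = 0 then (1 : ℝ) else c) else 0 := by
          refine (norm_sum_le _ _).trans (Finset.sum_le_sum fun f _ => ?_)
          refine (norm_sum_le _ _).trans (Finset.sum_le_sum fun C _ => ?_)
          split_ifs
          · exact norm_charTerm_le hc _
          · simp
      _ ≤ ∑ f : Fin n → G, ∑ C : Fin n → CDual G,
          if ∃ i j, ¬ omega G (f i, C i) (f j, C j) = 0 then
          ∏ i, ∏ j, (if omega G (f i, C i) (f j, C j) = 0 then (1 : ℝ) else c) else 0 := by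
          refine Finset.sum_le_sum_of_subset_of_nonneg (Finset.subset_univ _) fun f _ _ => ?_
          refine Finset.sum_nonneg fun C _ => ?_
          split_ifs
          · exact hw0 fun i => (f i, C i)
          · exact le_rfl
      _ = _ := by
          rw [Finset.sum_filter, ← Fintype.sum_prod_type']
          exact (Equiv.arrowProdEquivProdArrow (Fin n) (fun _ => G)
            (fun _ => CDual G)).symm.sum_comp (fun h : Fin n → G × CDual G =>
              if ∃ i j, ¬ omega G (h i) (h j) = 0 then
              ∏ i, ∏ j, (if omega G (h i) (h j) = 0 then (1 : ℝ) else c) else 0)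
  have hzero := squeeze_zero_norm hdiff herr
  simpa using hzero.add hmain
end
end

section
/- Given δ > 0, there exist c > 0 and a real number K, depending only on α, δ, a, and G, such that for all n, all codes F : V → G of distance δn, and all tuples A ∈ G^n, the random skew-symmetric matrix A_n with α-balanced entries satisfies |P(F A_n = 0) − |Sym² G| · |G|^{−n}| ≤ K e^{−cn} |G|^{−n}, and P(F A_n = A) ≤ K |G|^{−n}. -/
/-! The proof is Fourier analysis on `G ^ n`. Put `f i = F (v i)`. For a tuple `C` of characters of
`G`, the Fourier coefficient of the law of `F A_n` at `C` is a product over `i < j` of the expectations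
of `ζ ^ ξ` with `ζ = C j (f i) / C i (f j)` (`prob_eq_sum`). Such a factor is `1` if `ζ = 1`, and
otherwise at most `exp (-β)` in absolute value, because `ξ` is balanced (`exists_decay`). So the
coefficient is exponentially small in the number of pairs at which `C` is not symmetric, the
*defect* of `C`.

The special tuples, those with no defect, contribute the main term. If the `f i` generate `G`, a
special tuple is `i ↦ φ (f i)` for a unique symmetric homomorphism `φ : G → Ĝ`, that is, for a
character of `Sym² G`; so there are `|Sym² G|` of them (`card_special`).

For the other tuples, consider the pairs `(f i, C i)` in the finite group `G × Ĝ` with its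
symplectic form. Either two values that are each taken at least `m` times, `m` of order `n`, do not
pair trivially, and the defect is at least `m²`, which beats the number `|G| ^ n` of all tuples; or
the values taken that often generate an isotropic subgroup, which projects onto `G` since `F` is a
code, hence is the graph of a symmetric homomorphism (`exists_symm_hom`), and `C` differs from a
special tuple at `s ≤ δ n / 2` places only (`defect_large_or_close`). In the second case the code
property makes each of the `s` places contribute at least `δ n / 2` to the defect
(`defect_ge_of_close`), and the sum over these `C` is at most
`|Sym² G| ((1 + |G| exp (-b n)) ^ n - 1)`, which is exponentially small (`sum_nonspecial_le`,
`numeric_bound`).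
-/

open MeasureTheory Filter
open scoped TensorProduct

noncomputable section

/-- `F : (ℤ/a)^n → G` is a code of distance `w`: it remains surjective after deleting
any fewer than `w` of the standard coordinates. -/
def IsCode (a : ℕ) {n : ℕ} {G : Type} [AddCommGroup G]
    (F : (Fin n → ZMod a) →+ G) (w : ℝ) : Prop :=
  ∀ σ : Finset (Fin n), (σ.card : ℝ) < w →
    ∀ g : G, ∃ v : Fin n → ZMod a, (∀ i ∈ σ, v i = 0) ∧ F v = g

/-! ### Isotropic subgroups of `G × Ĝ` -/

/-- The subgroup generated by a set on which the form `((g, χ), (h, ψ)) ↦ ψ g / χ h` vanishes is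
isotropic for this form. -/
lemma isotropic_closure {G : Type} [AddCommGroup G] (S : Set (G × AddChar G ℂ))
    (hS : ∀ z ∈ S, ∀ w ∈ S, w.2 z.1 = z.2 w.1) :
    ∀ z ∈ AddSubgroup.closure S, ∀ w ∈ AddSubgroup.closure S, w.2 z.1 = z.2 w.1 := by
  intro z hz w hw
  induction hz, hw using AddSubgroup.closure_induction₂ with
  | mem x y hx hy => exact hS x hx y hy
  | zero_left x hx => simp
  | zero_right x hx => simp
  | add_left x y z hx hy hz h1 h2 => simp [AddChar.map_add_eq_mul, h1, h2]
  | add_right y z x hy hz hx h1 h2 => simp [AddChar.map_add_eq_mul, h1, h2]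
  | neg_left x y hx hy h => simp [AddChar.map_neg_eq_inv, AddChar.neg_apply, h]
  | neg_right x y hx hy h => simp [AddChar.map_neg_eq_inv, AddChar.neg_apply, h]

/-- An isotropic subgroup of `G × Ĝ` that surjects onto `G` is the graph of a symmetric
homomorphism `G → Ĝ`: an element `(0, χ)` of it pairs trivially with everything, so `χ` is
trivial. -/
lemma exists_symm_hom {G : Type} [AddCommGroup G] (L : AddSubgroup (G × AddChar G ℂ))
    (hL : ∀ z ∈ L, ∀ w ∈ L, w.2 z.1 = z.2 w.1) (hs : ∀ g : G, ∃ χ, (g, χ) ∈ L) :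
    ∃ φ : G →+ AddChar G ℂ, (∀ z ∈ L, z.2 = φ z.1) ∧ ∀ g h, φ g h = φ h g := by
  choose f hf using hs
  have key : ∀ z ∈ L, z.2 = f z.1 := by
    intro z hz
    ext h
    exact (hL _ (hf h) _ hz).trans (hL _ (hf h) _ (hf z.1)).symm
  refine ⟨AddMonoidHom.mk' f fun g h => ?_, key, fun g h => ?_⟩
  · exact (key _ (L.add_mem (hf g) (hf h))).symm
  · exact (hL _ (hf g) _ (hf h)).symm

/-! ### Special tuples of characters and `Sym²` -/

/-- The tuples `C` of characters that pair symmetrically with the elements `f i`; these are the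
ones for which every entry of the random matrix disappears from the Fourier coefficient. -/
def IsSpecial {G : Type} [AddCommGroup G] {n : ℕ} (f : Fin n → G)
    (C : Fin n → AddChar G ℂ) : Prop :=
  ∀ i j, C j (f i) = C i (f j)

lemma addChar_ext_closure {G : Type} [AddCommGroup G] {S : Set G}
    (hS : AddSubgroup.closure S = ⊤) {χ ψ : AddChar G ℂ} (h : ∀ s ∈ S, χ s = ψ s) : χ = ψ := by
  ext g
  have hg : g ∈ AddSubgroup.closure S := hS ▸ AddSubgroup.mem_top g
  induction hg using AddSubgroup.closure_induction with
  | mem x hx => exact h x hx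
  | zero => simp
  | add x y _ _ h1 h2 => simp [AddChar.map_add_eq_mul, h1, h2]
  | neg x _ h1 => simp [AddChar.map_neg_eq_inv, h1]

/-- A bi-character of `G`, as a character of `G ⊗ G`. -/
def tensorChar {G : Type} [AddCommGroup G] (φ : G →+ AddChar G ℂ) : AddChar (G ⊗[ℤ] G) ℂ :=
  AddChar.toAddMonoidHomEquiv.symm <|
    (TensorProduct.liftAddHom (R := ℤ) (P := Additive ℂ)
      { toFun := fun g => (φ g).toAddMonoidHom
        map_zero' := by ext; simp
        map_add' := fun x y => by ext; simp }
      (fun r m k => by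
        change Additive.ofMul ((φ (r • m)) k) = Additive.ofMul (φ m (r • k))
        rw [AddChar.map_zsmul_eq_zpow, map_zsmul, AddChar.zsmul_apply]) :
      (G ⊗[ℤ] G) →+ Additive ℂ)

/-- Characters of `Sym² G` are the symmetric bi-characters of `G`. -/
def symCharEquiv (G : Type) [AddCommGroup G] :
    AddChar (symSq G) ℂ ≃ {φ : G →+ AddChar G ℂ // ∀ g h, φ g h = φ h g} where
  toFun ψ :=
    ⟨AddMonoidHom.mk'
      (fun g =>
        { toFun := fun h => ψ (QuotientAddGroup.mk (g ⊗ₜ[ℤ] h))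
          map_zero_eq_one' := by simp
          map_add_eq_mul' := fun x y => by
            rw [TensorProduct.tmul_add, QuotientAddGroup.mk_add, AddChar.map_add_eq_mul] })
      (fun x y => by
        ext h
        change ψ _ = ψ _ * ψ _
        rw [TensorProduct.add_tmul, QuotientAddGroup.mk_add, AddChar.map_add_eq_mul]),
      fun g h => by
        change ψ _ = ψ _
        congr 1
        rw [QuotientAddGroup.eq]
        apply AddSubgroup.subset_closure
        exact ⟨h, g, by abel⟩⟩
  invFun φ :=
    AddChar.toAddMonoidHomEquiv.symm <|
      QuotientAddGroup.lift _ (tensorChar φ.1).toAddMonoidHom <| by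
        rw [AddSubgroup.closure_le]
        rintro _ ⟨g, h, rfl⟩
        rw [SetLike.mem_coe, AddMonoidHom.mem_ker]
        -- `Additive ℂ` is not a group, so the difference is evaluated through the character.
        change tensorChar φ.1 (g ⊗ₜ[ℤ] h - h ⊗ₜ[ℤ] g) = 1
        rw [AddChar.map_sub_eq_div]
        change φ.1 g h / φ.1 h g = 1
        rw [φ.2 g h, div_self (AddChar.val_isUnit _ _).ne_zero]
  left_inv ψ := by
    ext x
    obtain ⟨t, rfl⟩ := QuotientAddGroup.mk_surjective x
    induction t using TensorProduct.induction_on with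
    | zero => rw [QuotientAddGroup.mk_zero, AddChar.map_zero_eq_one, AddChar.map_zero_eq_one]
    | tmul g h => rfl
    | add x y hx hy =>
      rw [QuotientAddGroup.mk_add, AddChar.map_add_eq_mul, hx, hy, AddChar.map_add_eq_mul]
  right_inv φ := by
    ext g h
    rfl

lemma finite_symSq (G : Type) [AddCommGroup G] [Finite G] : Finite (symSq G) := by
  have : Finite (G ⊗[ℤ] G) := by
    have : Module.Finite ℤ G := Module.Finite.of_finite
    have : Module.Finite ℤ (G ⊗[ℤ] G) := Module.Finite.tensorProduct ℤ G G
    refine Module.finite_of_fg_torsion _ ?_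
    intro x
    refine ⟨⟨(Nat.card G : ℤ), ?_⟩, ?_⟩
    · rw [mem_nonZeroDivisors_iff_ne_zero]
      exact_mod_cast Nat.card_pos.ne'
    · induction x using TensorProduct.induction_on with
      | zero => simp
      | tmul x y =>
        change (Nat.card G : ℤ) • (x ⊗ₜ[ℤ] y) = 0
        rw [TensorProduct.smul_tmul']
        simp
      | add x y hx hy => rw [smul_add, hx, hy, add_zero]
  infer_instance

/-- If the `f i` generate `G`, there are exactly `|Sym² G|` special tuples. -/
lemma card_special {G : Type} [AddCommGroup G] [Fintype G] {n : ℕ} (f : Fin n → G)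
    (hf : AddSubgroup.closure (Set.range f) = ⊤) :
    Nat.card {C : Fin n → AddChar G ℂ // IsSpecial f C} = Nat.card (symSq G) := by
  have := finite_symSq G
  have := Fintype.ofFinite (symSq G)
  have h1 : Nat.card (symSq G) = Nat.card (AddChar (symSq G) ℂ) := by
    rw [Nat.card_eq_fintype_card, Nat.card_eq_fintype_card, AddChar.card_eq]
  rw [h1, Nat.card_congr (symCharEquiv G)]
  symm
  refine Nat.card_eq_of_bijective (fun φ => ⟨fun i => φ.1 (f i), fun i j => φ.2 _ _⟩) ⟨?_, ?_⟩
  · intro φ ψ h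
    have h' : ∀ i, φ.1 (f i) = ψ.1 (f i) := fun i => congrFun (congrArg Subtype.val h) i
    apply Subtype.ext
    refine AddMonoidHom.eq_of_eqOn_dense hf ?_
    rintro _ ⟨i, rfl⟩
    exact h' i
  · rintro ⟨C, hC⟩
    set S : Set (G × AddChar G ℂ) := Set.range fun i => (f i, C i) with hS
    have iso := isotropic_closure S (by
      rintro _ ⟨i, rfl⟩ _ ⟨j, rfl⟩
      exact hC i j)
    have surj : ∀ g : G, ∃ χ, (g, χ) ∈ AddSubgroup.closure S := by
      intro g
      have hg : g ∈ AddSubgroup.closure (Set.range f) := hf ▸ AddSubgroup.mem_top g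
      have : (AddSubgroup.closure S).map (AddMonoidHom.fst G (AddChar G ℂ)) =
          AddSubgroup.closure (Set.range f) := by
        rw [AddMonoidHom.map_closure, hS, ← Set.range_comp]
        rfl
      rw [← this] at hg
      obtain ⟨z, hz, rfl⟩ := hg
      exact ⟨z.2, hz⟩
    obtain ⟨φ, h1, h2⟩ := exists_symm_hom _ iso surj
    refine ⟨⟨φ, h2⟩, Subtype.ext (funext fun i => ?_)⟩
    exact (h1 (f i, C i) (AddSubgroup.subset_closure ⟨i, rfl⟩)).symm

/-! ### The characteristic function of a balanced integer at roots of unity -/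

lemma exists_root_gap (a : ℕ) (ha : 0 < a) :
    ∃ s : ℝ, 0 < s ∧ ∀ z : ℂ, z ^ a = 1 → z ≠ 1 → s ≤ ‖z - 1‖ := by
  have hfin : {z : ℂ | z ^ a = 1 ∧ z ≠ 1}.Finite := by
    refine (Polynomial.nthRootsFinset a (1 : ℂ)).finite_toSet.subset ?_
    rintro z ⟨hz, -⟩
    simpa [Polynomial.mem_nthRootsFinset ha] using hz
  obtain h | h := {z : ℂ | z ^ a = 1 ∧ z ≠ 1}.eq_empty_or_nonempty
  · refine ⟨1, one_pos, fun z h1 h2 => ?_⟩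
    have : z ∈ {z : ℂ | z ^ a = 1 ∧ z ≠ 1} := ⟨h1, h2⟩
    simp [h] at this
  · obtain ⟨z₀, ⟨h1, h2⟩, hmin⟩ := hfin.exists_minimalFor (fun z => ‖z - 1‖) _ h
    refine ⟨‖z₀ - 1‖, norm_pos_iff.2 (sub_ne_zero.2 h2), fun z hz hz' => ?_⟩
    by_contra hlt
    exact hlt (hmin (j := z) ⟨hz, hz'⟩ (not_le.1 hlt).le)

lemma re_eq_of_norm_one {z : ℂ} (hz : ‖z‖ = 1) : z.re = 1 - ‖z - 1‖ ^ 2 / 2 := by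
  have h1 : ‖z‖ ^ 2 = z.re ^ 2 + z.im ^ 2 := by
    rw [← Complex.normSq_eq_norm_sq, Complex.normSq_apply]; ring
  have h2 : ‖z - 1‖ ^ 2 = (z.re - 1) ^ 2 + z.im ^ 2 := by
    rw [← Complex.normSq_eq_norm_sq, Complex.normSq_apply]; simp; ring
  rw [hz] at h1
  rw [h2]
  linarith

/-- The decay factor. After rotating so that the expectation is a nonnegative real, the powers of
`ζ` within half a gap of the positive direction form a single residue class modulo the order of
`ζ`, and this class has mass at most `1 - α`. -/
lemma exists_decay (α : ℝ) (hα : 0 < α) (a : ℕ) (ha : 0 < a) :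
    ∃ β : ℝ, 0 < β ∧ ∀ (μ : Measure ℤ), IsProbabilityMeasure μ → IsBalanced α μ →
      ∀ ζ : ℂ, ζ ^ a = 1 → ζ ≠ 1 → ‖∫ x : ℤ, ζ ^ x ∂μ‖ ≤ Real.exp (-β) := by
  obtain ⟨s, hs, hgap⟩ := exists_root_gap a ha
  refine ⟨α * (s ^ 2 / 8), by positivity, fun μ hμ hbal ζ hζ hζ1 => ?_⟩
  have hζ0 : ζ ≠ 0 := by
    rintro rfl
    simp [ha.ne'] at hζ
  have hnorm : ‖ζ‖ = 1 := Complex.norm_eq_one_of_pow_eq_one hζ ha.ne'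
  obtain ⟨u, hu, hθ⟩ := Complex.exists_norm_eq_mul_self (∫ x : ℤ, ζ ^ x ∂μ)
  have hInt : Integrable (fun x : ℤ => u * ζ ^ x) μ := by
    refine Integrable.of_bound (measurable_of_countable _).aestronglyMeasurable 1 ?_
    refine Filter.Eventually.of_forall fun x => ?_
    simp [hu, hnorm]
  have hre : ‖∫ x : ℤ, ζ ^ x ∂μ‖ = ∫ x : ℤ, (u * ζ ^ x).re ∂μ := by
    have : (∫ x : ℤ, (u * ζ ^ x).re ∂μ) = (∫ x : ℤ, u * ζ ^ x ∂μ).re :=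
      integral_re hInt
    rw [this, integral_const_mul, ← hθ, Complex.ofReal_re]
  have hpt : ∀ x : ℤ, (u * ζ ^ x).re = 1 - ‖u * ζ ^ x - 1‖ ^ 2 / 2 := fun x =>
    re_eq_of_norm_one (by simp [hu, hnorm])
  have hpow : ∀ x : ℤ, (ζ ^ x) ^ a = 1 := fun x => by
    rw [← zpow_natCast, zpow_comm, zpow_natCast, hζ, one_zpow]
  -- a prime dividing the order of `ζ`
  obtain ⟨p, hp, hpd⟩ := Nat.exists_prime_and_dvd (n := orderOf ζ) (by
    rwa [Ne, orderOf_eq_one_iff])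
  -- all integers `x` with `u * ζ ^ x` close to `1` lie in one class modulo `p`
  have hclass : ∃ r : ZMod p, ∀ x : ℤ, (x : ZMod p) ≠ r → s / 2 ≤ ‖u * ζ ^ x - 1‖ := by
    by_cases hk : ∃ k : ℤ, ‖u * ζ ^ k - 1‖ < s / 2
    · obtain ⟨k, hk⟩ := hk
      refine ⟨k, fun x hx => ?_⟩
      have hne : ζ ^ (x - k) ≠ 1 := by
        intro h
        rw [(IsPrimitiveRoot.orderOf ζ).zpow_eq_one_iff_dvd] at h
        apply hx
        rw [← sub_eq_zero, ← Int.cast_sub, ZMod.intCast_zmod_eq_zero_iff_dvd]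
        exact (Int.natCast_dvd_natCast.2 hpd).trans h
      have h1 := hgap _ (hpow (x - k)) hne
      have h2 : u * ζ ^ x - u * ζ ^ k = u * ζ ^ k * (ζ ^ (x - k) - 1) := by
        rw [zpow_sub₀ hζ0]
        field_simp
      have h3 : ‖u * ζ ^ x - u * ζ ^ k‖ = ‖ζ ^ (x - k) - 1‖ := by
        rw [h2]; simp [hu, hnorm]
      have h4 : ‖u * ζ ^ x - u * ζ ^ k‖ ≤ ‖u * ζ ^ x - 1‖ + ‖u * ζ ^ k - 1‖ := by
        have := norm_sub_le (u * ζ ^ x - 1) (u * ζ ^ k - 1)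
        simpa using this
      linarith
    · push Not at hk
      exact ⟨0, fun x _ => hk x⟩
  obtain ⟨r, hr⟩ := hclass
  set B : Set ℤ := {x : ℤ | (x : ZMod p) = r} with hB
  have hBm : MeasurableSet B := MeasurableSet.of_discrete
  have hμB : μ.real B ≤ 1 - α := by
    have h1 := hbal p hp r
    have h2 : 0 ≤ 1 - α := by
      by_contra hneg
      have hz : ∀ r : ZMod p, μ {x : ℤ | (x : ZMod p) = r} = 0 := fun r => by
        have := hbal p hp r
        rw [ENNReal.ofReal_of_nonpos (not_le.1 hneg).le] at this
        exact le_antisymm this bot_le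
      have huniv : (Set.univ : Set ℤ) = ⋃ r : ZMod p, {x : ℤ | (x : ZMod p) = r} := by
        ext x; simp
      have : NeZero p := ⟨hp.ne_zero⟩
      have h0 : μ Set.univ = 0 := by
        rw [huniv]
        exact measure_iUnion_null hz
      simp at h0
    exact ENNReal.toReal_le_of_le_ofReal h2 h1
  have hle : ∀ x : ℤ, (u * ζ ^ x).re ≤ 1 - (s ^ 2 / 8) * Bᶜ.indicator 1 x := by
    intro x
    rw [hpt]
    by_cases hx : x ∈ B
    · simp only [Set.mem_compl_iff, hx, not_true_eq_false, not_false_eq_true,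
        Set.indicator_of_notMem]
      have := sq_nonneg ‖u * ζ ^ x - 1‖
      linarith
    · rw [Set.indicator_of_mem (by exact hx)]
      have h1 := hr x hx
      have h2 : (s / 2) ^ 2 ≤ ‖u * ζ ^ x - 1‖ ^ 2 := by gcongr
      simp only [Pi.one_apply]
      linarith
  have hind : Integrable (Bᶜ.indicator (1 : ℤ → ℝ)) μ :=
    (integrable_const (1 : ℝ)).indicator hBm.compl
  calc ‖∫ x : ℤ, ζ ^ x ∂μ‖ = ∫ x : ℤ, (u * ζ ^ x).re ∂μ := hre
    _ ≤ ∫ x : ℤ, (1 - (s ^ 2 / 8) * Bᶜ.indicator 1 x) ∂μ :=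
        integral_mono hInt.re ((integrable_const _).sub (hind.const_mul _)) hle
    _ = 1 - (s ^ 2 / 8) * (1 - μ.real B) := by
        rw [integral_sub (integrable_const _) (hind.const_mul _), integral_const_mul,
          integral_indicator_one hBm.compl, probReal_compl_eq_one_sub hBm]
        simp
    _ ≤ 1 - α * (s ^ 2 / 8) := by
        have : 0 ≤ s ^ 2 / 8 := by positivity
        nlinarith
    _ ≤ Real.exp (-(α * (s ^ 2 / 8))) := by
        have := Real.add_one_le_exp (-(α * (s ^ 2 / 8)))
        linarith

/-! ### Counting the non-symmetric pairs of a tuple of characters -/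

/-- The set of (ordered) pairs at which `C` fails to be symmetric. -/
def defect {G : Type} [AddCommGroup G] {n : ℕ} (f : Fin n → G) (C : Fin n → AddChar G ℂ) :
    Finset (Fin n × Fin n) :=
  Finset.univ.filter fun q => C q.2 (f q.1) ≠ C q.1 (f q.2)

/-- The code property for the images `f i` of the standard basis vectors: they generate `G` even
after any fewer than `w` of them are deleted. -/
def Generates {G : Type} [AddCommGroup G] {n : ℕ} (f : Fin n → G) (w : ℝ) : Prop :=
  ∀ σ : Finset (Fin n), (σ.card : ℝ) < w → AddSubgroup.closure (f '' {i | i ∉ σ}) = ⊤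

lemma generates_of_isCode {a : ℕ} (ha : 0 < a) {G : Type} [AddCommGroup G] {n : ℕ}
    {F : (Fin n → ZMod a) →+ G} {w : ℝ} (hF : IsCode a F w) :
    Generates (fun i => F (Pi.single i 1)) w := by
  have : NeZero a := ⟨ha.ne'⟩
  intro σ hσ
  rw [AddSubgroup.eq_top_iff']
  intro g
  obtain ⟨v, hv, rfl⟩ := hF σ hσ g
  have hsum : v = ∑ i, (v i).val • (Pi.single i 1 : Fin n → ZMod a) := by
    ext k
    rw [Finset.sum_apply, Finset.sum_eq_single k]
    · simp only [Pi.smul_apply, Pi.single_eq_same, nsmul_one, ZMod.natCast_zmod_val]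
    · intro i _ hik
      simp only [Pi.smul_apply, Pi.single_eq_of_ne hik.symm, smul_zero]
    · simp
  rw [hsum, map_sum]
  refine AddSubgroup.sum_mem _ fun i _ => ?_
  rw [map_nsmul]
  by_cases hi : i ∈ σ
  · simp [hv i hi]
  · exact AddSubgroup.nsmul_mem _ 
      (AddSubgroup.subset_closure (Set.mem_image_of_mem _ hi)) _

/-- Either the defect is quadratically large, or `C` differs from a special tuple in few places.
Call `z ∈ G × Ĝ` popular if it equals `(f i, C i)` for at least `m` indices `i`. Two popular
elements that do not pair trivially produce `m²` non-symmetric pairs; otherwise the popular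
elements generate an isotropic subgroup, hence the graph of a symmetric homomorphism, and the
special tuple it defines agrees with `C` at all indices carrying a popular element. -/
lemma defect_large_or_close {G : Type} [AddCommGroup G] [Fintype G] {n : ℕ} {f : Fin n → G}
    {w : ℝ} (hf : Generates f w) {m : ℝ} (hm : 0 < m) (hmw : (Fintype.card G : ℝ) ^ 2 * m < w)
    (C : Fin n → AddChar G ℂ) :
    m ^ 2 ≤ ((defect f C).card : ℝ) ∨
      ∃ C', IsSpecial f C' ∧
        ((Finset.univ.filter fun i => C i ≠ C' i).card : ℝ) ≤ (Fintype.card G : ℝ) ^ 2 * m := by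
  classical
  set fib : G × AddChar G ℂ → Finset (Fin n) :=
    fun z => Finset.univ.filter fun i => (f i, C i) = z with hfib
  set S : Set (G × AddChar G ℂ) := {z | m ≤ ((fib z).card : ℝ)} with hS
  set σ : Finset (Fin n) := Finset.univ.filter fun i => (f i, C i) ∉ S with hσ
  have hσcard : (σ.card : ℝ) ≤ (Fintype.card G : ℝ) ^ 2 * m := by
    have h1 : σ.card = ∑ z : G × AddChar G ℂ, (σ.filter fun i => (f i, C i) = z).card :=
      Finset.card_eq_sum_card_fiberwise fun _ _ => Finset.mem_univ _
    have h2 : ∀ z : G × AddChar G ℂ, ((σ.filter fun i => (f i, C i) = z).card : ℝ) ≤ m := by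
      intro z
      by_cases hz : z ∈ S
      · have : (σ.filter fun i => (f i, C i) = z) = ∅ := by
          rw [Finset.filter_eq_empty_iff]
          rintro i hi rfl
          exact (Finset.mem_filter.1 hi).2 hz
        rw [this]
        simpa using hm.le
      · refine le_trans ?_ (not_le.1 hz).le
        exact_mod_cast Finset.card_le_card
          (Finset.filter_subset_filter _ (Finset.subset_univ _))
    rw [h1]
    push_cast
    refine (Finset.sum_le_sum fun z _ => h2 z).trans ?_
    rw [Finset.sum_const, nsmul_eq_mul, Finset.card_univ, Fintype.card_prod, AddChar.card_eq]
    push_cast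
    rw [sq]
  by_cases hiso : ∀ z ∈ S, ∀ w ∈ S, w.2 z.1 = z.2 w.1
  · right
    have surj : ∀ g : G, ∃ χ, (g, χ) ∈ AddSubgroup.closure S := by
      intro g
      have hg : g ∈ AddSubgroup.closure (f '' {i | i ∉ σ}) :=
        hf σ (hσcard.trans_lt hmw) ▸ AddSubgroup.mem_top g
      have hsub : f '' {i | i ∉ σ} ⊆ AddMonoidHom.fst G (AddChar G ℂ) '' S := by
        rintro _ ⟨i, hi, rfl⟩
        refine ⟨(f i, C i), ?_, rfl⟩
        by_contra h
        exact hi (Finset.mem_filter.2 ⟨Finset.mem_univ _, h⟩)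
      have hg' := AddSubgroup.closure_mono hsub hg
      rw [← AddMonoidHom.map_closure] at hg'
      obtain ⟨z, hz, rfl⟩ := hg'
      exact ⟨z.2, hz⟩
    obtain ⟨φ, h1, h2⟩ := exists_symm_hom _ (isotropic_closure S hiso) surj
    refine ⟨fun i => φ (f i), fun i j => h2 _ _, le_trans ?_ hσcard⟩
    refine Nat.cast_le.2 (Finset.card_le_card fun i hi => ?_)
    refine Finset.mem_filter.2 ⟨Finset.mem_univ _, fun hiS => ?_⟩
    exact (Finset.mem_filter.1 hi).2 (h1 _ (AddSubgroup.subset_closure hiS))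
  · left
    push Not at hiso
    obtain ⟨z, hz, w, hw, hzw⟩ := hiso
    have hsub : fib z ×ˢ fib w ⊆ defect f C := by
      rintro ⟨i, j⟩ hij
      obtain ⟨hi, hj⟩ := Finset.mem_product.1 hij
      have hi' : (f i, C i) = z := (Finset.mem_filter.1 hi).2
      have hj' : (f j, C j) = w := (Finset.mem_filter.1 hj).2
      refine Finset.mem_filter.2 ⟨Finset.mem_univ _, ?_⟩
      rw [← hi', ← hj'] at hzw
      exact hzw
    calc m ^ 2 = m * m := sq m
      _ ≤ (fib z).card * (fib w).card := mul_le_mul hz hw hm.le (Nat.cast_nonneg _)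
      _ = ((fib z ×ˢ fib w).card : ℝ) := by rw [Finset.card_product]; push_cast; rfl
      _ ≤ _ := Nat.cast_le.2 (Finset.card_le_card hsub)

/-- If `C` differs from a special tuple `C'` at `t` places at most, each of these places `i` starts
at least `w - t` non-symmetric pairs `(i, j)`: the characters `C i` and `C' i` differ at no fewer
than `w` of the `f j`, and `C` agrees with `C'` at all but `t` of the corresponding `j`. -/
lemma defect_ge_of_close {G : Type} [AddCommGroup G] {n : ℕ} {f : Fin n → G}
    {w : ℝ} (hf : Generates f w) {C C' : Fin n → AddChar G ℂ} (hC' : IsSpecial f C')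
    {t : ℝ} (ht : ((Finset.univ.filter fun i => C i ≠ C' i).card : ℝ) ≤ t) :
    ((Finset.univ.filter fun i => C i ≠ C' i).card : ℝ) * (w - t) ≤ (defect f C).card := by
  classical
  set σ := Finset.univ.filter fun i => C i ≠ C' i with hσ
  have hrow : ∀ i ∈ σ, w - t ≤ (((defect f C).filter fun q => q.1 = i).card : ℝ) := by
    intro i hi
    set τ := Finset.univ.filter fun j => C i (f j) ≠ C' i (f j) with hτ
    have hτw : w ≤ (τ.card : ℝ) := by
      by_contra hlt
      refine (Finset.mem_filter.1 hi).2 (addChar_ext_closure (hf τ (not_le.1 hlt)) ?_)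
      rintro _ ⟨j, hj, rfl⟩
      by_contra hne
      exact hj (Finset.mem_filter.2 ⟨Finset.mem_univ _, hne⟩)
    have hsub : (τ \ σ).image (fun j => (i, j)) ⊆ (defect f C).filter fun q => q.1 = i := by
      intro q hq
      obtain ⟨j, hj, rfl⟩ := Finset.mem_image.1 hq
      obtain ⟨hjτ, hjσ⟩ := Finset.mem_sdiff.1 hj
      refine Finset.mem_filter.2 ⟨Finset.mem_filter.2 ⟨Finset.mem_univ _, ?_⟩, rfl⟩
      have hj' : C j = C' j := by
        by_contra h
        exact hjσ (Finset.mem_filter.2 ⟨Finset.mem_univ _, h⟩)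
      change C j (f i) ≠ C i (f j)
      rw [hj', hC' i j]
      exact (Finset.mem_filter.1 hjτ).2.symm
    have h1 : (τ \ σ).card ≤ ((defect f C).filter fun q => q.1 = i).card := by
      rw [← Finset.card_image_of_injective (τ \ σ) (f := fun j => (i, j))
        (fun x y h => congrArg Prod.snd h)]
      exact Finset.card_le_card hsub
    have h2 : τ.card ≤ (τ \ σ).card + σ.card := Finset.card_le_card_sdiff_add_card
    have h1' : ((τ \ σ).card : ℝ) ≤ (((defect f C).filter fun q => q.1 = i).card : ℝ) := by
      exact_mod_cast h1
    have h2' : (τ.card : ℝ) ≤ (τ \ σ).card + σ.card := by exact_mod_cast h2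
    linarith
  calc (σ.card : ℝ) * (w - t) = ∑ i ∈ σ, (w - t) := by rw [Finset.sum_const, nsmul_eq_mul]
    _ ≤ ∑ i ∈ σ, (((defect f C).filter fun q => q.1 = i).card : ℝ) := Finset.sum_le_sum hrow
    _ ≤ ∑ i, (((defect f C).filter fun q => q.1 = i).card : ℝ) :=
        Finset.sum_le_sum_of_subset_of_nonneg (Finset.subset_univ _)
          fun _ _ _ => Nat.cast_nonneg _
    _ = (defect f C).card := by
        rw [Finset.card_eq_sum_card_fiberwise (f := Prod.fst) (t := Finset.univ)
          fun _ _ => Finset.mem_univ _]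
        push_cast
        rfl

/-- The sum over all non-special tuples of a weight that is exponentially small in the defect. -/
lemma sum_nonspecial_le {G : Type} [AddCommGroup G] [Fintype G] {n : ℕ} {f : Fin n → G}
    {w : ℝ} (hw : 0 < w) (hf : Generates f w) {β : ℝ} (hβ : 0 < β)
    (S : Finset (Fin n → AddChar G ℂ)) (hS : ∀ C, C ∈ S ↔ IsSpecial f C) :
    ∑ C ∈ Sᶜ, Real.exp (-β * (defect f C).card) ≤
      (Fintype.card G : ℝ) ^ n *
          Real.exp (-β * (w / (2 * (Fintype.card G : ℝ) ^ 2)) ^ 2) +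
        S.card * ((1 + Fintype.card G * Real.exp (-β * (w / 2))) ^ n - 1) := by
  classical
  have hG : (0 : ℝ) < Fintype.card G := by exact_mod_cast Fintype.card_pos
  set m : ℝ := w / (2 * (Fintype.card G : ℝ) ^ 2) with hm
  have hm0 : 0 < m := by positivity
  have hGm : (Fintype.card G : ℝ) ^ 2 * m = w / 2 := by rw [hm]; field_simp
  set q : ℝ := Real.exp (-β * (w / 2)) with hq
  set W : (Fin n → AddChar G ℂ) → (Fin n → AddChar G ℂ) → ℝ :=
    fun C' C => ∏ i, if C i = C' i then 1 else q with hW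
  have hW0 : ∀ C' C, 0 ≤ W C' C := fun C' C =>
    Finset.prod_nonneg fun i _ => by split_ifs <;> positivity
  have hpt : ∀ C ∈ Sᶜ, Real.exp (-β * (defect f C).card) ≤
      Real.exp (-β * m ^ 2) + ∑ C' ∈ S, if C = C' then 0 else W C' C := by
    intro C hC
    have hsum0 : ∀ C' ∈ S, 0 ≤ if C = C' then 0 else W C' C := fun C' _ => by
      split_ifs
      · exact le_rfl
      · exact hW0 _ _
    rcases defect_large_or_close hf hm0 (by rw [hGm]; linarith) C with h | ⟨C', hC', hclose⟩
    · refine le_add_of_le_of_nonneg (Real.exp_le_exp.2 ?_) (Finset.sum_nonneg hsum0)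
      nlinarith
    · refine le_add_of_nonneg_of_le (Real.exp_pos _).le ?_
      have hne : C ≠ C' := by
        rintro rfl
        exact Finset.mem_compl.1 hC ((hS C).2 hC')
      refine le_trans ?_ (Finset.single_le_sum hsum0 ((hS C').2 hC'))
      rw [if_neg hne, hW]
      simp only
      rw [hGm] at hclose
      have h1 := defect_ge_of_close hf hC' hclose
      rw [Finset.prod_ite, Finset.prod_const_one, one_mul, Finset.prod_const, hq,
        ← Real.exp_nat_mul]
      refine Real.exp_le_exp.2 ?_
      have h2 : w - w / 2 = w / 2 := by ring
      rw [h2] at h1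
      simp only [ne_eq] at h1
      nlinarith
  have hinner : ∀ C' ∈ S, (∑ C ∈ Sᶜ, if C = C' then 0 else W C' C) ≤
      (1 + Fintype.card G * q) ^ n - 1 := by
    intro C' _
    have hall : ∑ C, W C' C = ∏ i : Fin n, ∑ χ : AddChar G ℂ, if χ = C' i then 1 else q := by
      rw [Finset.prod_univ_sum, Fintype.piFinset_univ]
    have hone : ∀ i, (∑ χ : AddChar G ℂ, if χ = C' i then 1 else q) ≤
        1 + Fintype.card G * q := by
      intro i
      have : ∀ χ : AddChar G ℂ, (if χ = C' i then 1 else q) ≤ (if χ = C' i then 1 else 0) + q := by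
        intro χ
        have : 0 ≤ q := (Real.exp_pos _).le
        split_ifs <;> linarith
      refine (Finset.sum_le_sum fun χ _ => this χ).trans ?_
      rw [Finset.sum_add_distrib]
      simp
    have hall' : ∑ C, W C' C ≤ (1 + Fintype.card G * q) ^ n := by
      rw [hall]
      refine (Finset.prod_le_prod (fun i _ => Finset.sum_nonneg fun χ _ => ?_)
        fun i _ => hone i).trans ?_
      · split_ifs <;> positivity
      · simp
    have hself : W C' C' = 1 := by simp [hW]
    have hsplit : (∑ C, if C = C' then 0 else W C' C) = ∑ C, W C' C - 1 := by
      have h := Finset.sum_erase_add Finset.univ (W C') (Finset.mem_univ C')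
      rw [← h, hself, add_sub_cancel_right, ← Finset.sum_erase_add Finset.univ _
        (Finset.mem_univ C'), if_pos rfl, add_zero]
      exact Finset.sum_congr rfl fun C hC => if_neg (Finset.ne_of_mem_erase hC)
    calc (∑ C ∈ Sᶜ, if C = C' then 0 else W C' C)
        ≤ ∑ C, if C = C' then 0 else W C' C :=
          Finset.sum_le_sum_of_subset_of_nonneg (Finset.subset_univ _) fun C _ _ => by
            split_ifs
            · exact le_rfl
            · exact hW0 _ _
      _ ≤ _ := by rw [hsplit]; linarith
  calc ∑ C ∈ Sᶜ, Real.exp (-β * (defect f C).card)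
      ≤ ∑ C ∈ Sᶜ, (Real.exp (-β * m ^ 2) + ∑ C' ∈ S, if C = C' then 0 else W C' C) :=
        Finset.sum_le_sum hpt
    _ = Sᶜ.card * Real.exp (-β * m ^ 2) +
          ∑ C' ∈ S, ∑ C ∈ Sᶜ, if C = C' then 0 else W C' C := by
        rw [Finset.sum_add_distrib, Finset.sum_const, nsmul_eq_mul, Finset.sum_comm]
    _ ≤ _ := by
        refine add_le_add (mul_le_mul_of_nonneg_right ?_ (Real.exp_pos _).le) ?_
        · have h1 : Sᶜ.card ≤ Fintype.card (Fin n → AddChar G ℂ) := Finset.card_le_univ _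
          rw [Fintype.card_fun, Fintype.card_fin, AddChar.card_eq] at h1
          exact_mod_cast h1
        · refine (Finset.sum_le_sum hinner).trans ?_
          rw [Finset.sum_const, nsmul_eq_mul]

/-! ### Fourier inversion -/

/-- The root of unity attached to the entry at position `q` in the Fourier coefficient of `C`. -/
def entryRoot {G : Type} [AddCommGroup G] {n : ℕ} (f : Fin n → G) (C : Fin n → AddChar G ℂ)
    (q : Fin n × Fin n) : ℂ :=
  C q.2 (f q.1) * (C q.1 (f q.2))⁻¹

lemma entryRoot_eq_one_iff {G : Type} [AddCommGroup G] {n : ℕ} (f : Fin n → G)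
    (C : Fin n → AddChar G ℂ) (q : Fin n × Fin n) :
    entryRoot f C q = 1 ↔ C q.2 (f q.1) = C q.1 (f q.2) :=
  mul_inv_eq_one₀ (AddChar.val_isUnit _ _).ne_zero

lemma entryRoot_pow {G : Type} [AddCommGroup G] {n : ℕ} {a : ℕ} (hG : ∀ g : G, a • g = 0)
    (f : Fin n → G) (C : Fin n → AddChar G ℂ) (q : Fin n × Fin n) :
    entryRoot f C q ^ a = 1 := by
  rw [entryRoot, mul_pow, inv_pow, ← AddChar.map_nsmul_eq_pow, ← AddChar.map_nsmul_eq_pow, hG, hG]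
  simp

lemma norm_entryRoot {G : Type} [AddCommGroup G] [Fintype G] {n : ℕ}
    (f : Fin n → G) (C : Fin n → AddChar G ℂ) (q : Fin n × Fin n) :
    ‖entryRoot f C q‖ = 1 := by
  rw [entryRoot, norm_mul, norm_inv, AddChar.norm_apply, AddChar.norm_apply]
  simp

lemma addChar_sum {G ι : Type} [AddCommGroup G] (χ : AddChar G ℂ) (s : Finset ι) (g : ι → G) :
    χ (∑ i ∈ s, g i) = ∏ i ∈ s, χ (g i) := by
  classical
  induction s using Finset.induction_on with
  | empty => simp
  | insert i s hi ih => rw [Finset.sum_insert hi, Finset.prod_insert hi, AddChar.map_add_eq_mul, ih]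

lemma map_column {a n : ℕ} {G : Type} [AddCommGroup G]
    (F : (Fin n → ZMod a) →+ G) (v : Fin n → ℤ) :
    F (fun i => (v i : ZMod a)) = ∑ i, v i • F (Pi.single i 1) := by
  have hsum : (fun i => (v i : ZMod a)) = ∑ i, v i • (Pi.single i 1 : Fin n → ZMod a) := by
    ext k
    rw [Finset.sum_apply, Finset.sum_eq_single k]
    · simp only [Pi.smul_apply, Pi.single_eq_same, zsmul_one]
    · intro i _ hik
      simp only [Pi.smul_apply, Pi.single_eq_of_ne hik.symm, smul_zero]
    · simp
  rw [hsum, map_sum]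
  simp only [map_zsmul]

/-- Skew-symmetry pairs the entries `(i, j)` and `(j, i)`, which leaves one factor for each
independent entry. -/
lemma prod_char_columns {a n : ℕ} {G : Type} [AddCommGroup G]
    (F : (Fin n → ZMod a) →+ G) (C : Fin n → AddChar G ℂ) (x : Fin n × Fin n → ℤ) :
    ∏ j, C j (F fun i => ((skewMatrix n x i j : ℤ) : ZMod a)) =
      ∏ q : Fin n × Fin n,
        if q.1 < q.2 then entryRoot (fun i => F (Pi.single i 1)) C q ^ x q else 1 := by
  set f : Fin n → G := fun i => F (Pi.single i 1) with hf
  have h1 : ∀ j, C j (F fun i => ((skewMatrix n x i j : ℤ) : ZMod a)) =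
      ∏ i, ((if i < j then C j (f i) ^ x (i, j) else 1) *
        (if j < i then C j (f i) ^ (-x (j, i)) else 1)) := by
    intro j
    rw [map_column, addChar_sum]
    refine Finset.prod_congr rfl fun i _ => ?_
    rw [AddChar.map_zsmul_eq_zpow, skewMatrix, Matrix.of_apply]
    rcases lt_trichotomy i j with h | h | h
    · simp [h, h.not_gt, hf]
    · simp [h]
    · simp [h, h.not_gt, hf]
  simp_rw [h1, Finset.prod_mul_distrib]
  rw [Finset.prod_comm (f := fun j i => if j < i then C j (f i) ^ (-x (j, i)) else 1),
    Fintype.prod_prod_type_right]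
  simp_rw [← Finset.prod_mul_distrib]
  refine Finset.prod_congr rfl fun j _ => Finset.prod_congr rfl fun i _ => ?_
  by_cases h : i < j
  · simp only [h, if_true, entryRoot, mul_zpow, inv_zpow', zpow_neg]
  · simp [h]

/-- The probability as a sum over tuples of characters of products of one-entry expectations. -/
lemma prob_eq_sum (μ : Measure ℤ) (hμ : IsProbabilityMeasure μ) {a n : ℕ} {G : Type}
    [AddCommGroup G] [Fintype G] (F : (Fin n → ZMod a) →+ G) (A : Fin n → G) :
    ((((matMeasure μ hμ n)
      {x | ∀ j, F (fun i => ((skewMatrix n x i j : ℤ) : ZMod a)) = A j}).toReal : ℝ) : ℂ) =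
    ((Fintype.card G : ℂ))⁻¹ ^ n * ∑ C : Fin n → AddChar G ℂ, (∏ j, C j (-A j)) *
      ∏ q : Fin n × Fin n, if q.1 < q.2 then
        ∫ k : ℤ, entryRoot (fun i => F (Pi.single i 1)) C q ^ k ∂μ else 1 := by
  classical
  set f : Fin n → G := fun i => F (Pi.single i 1) with hf
  set Y : (Fin n × Fin n → ℤ) → Fin n → G :=
    fun x j => F (fun i => ((skewMatrix n x i j : ℤ) : ZMod a)) with hY
  set E : Set (Fin n × Fin n → ℤ) := {x | ∀ j, Y x j = A j} with hE
  have hP : IsProbabilityMeasure (matMeasure μ hμ n) := by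
    unfold matMeasure; infer_instance
  have hEm : MeasurableSet E := E.to_countable.measurableSet
  have hcard : (Fintype.card G : ℂ) ≠ 0 := by exact_mod_cast Fintype.card_ne_zero
  have hpt : ∀ x, E.indicator (fun _ => (1 : ℂ)) x =
      ((Fintype.card G : ℂ))⁻¹ ^ n * ∑ C : Fin n → AddChar G ℂ, (∏ j, C j (-A j)) *
        ∏ q : Fin n × Fin n, if q.1 < q.2 then entryRoot f C q ^ x q else 1 := by
    intro x
    have h1 : E.indicator (fun _ => (1 : ℂ)) x =
        ∏ j, ((Fintype.card G : ℂ)⁻¹ * ∑ χ : AddChar G ℂ, χ (Y x j - A j)) := by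
      have h2 : ∀ j, (Fintype.card G : ℂ)⁻¹ * ∑ χ : AddChar G ℂ, χ (Y x j - A j) =
          if Y x j = A j then 1 else 0 := by
        intro j
        rw [AddChar.sum_apply_eq_ite]
        simp only [sub_eq_zero, mul_ite, mul_zero]
        rw [inv_mul_cancel₀ hcard]
      simp_rw [h2]
      rw [Finset.prod_ite_zero]
      simp [Set.indicator_apply, hE]
    rw [h1, Finset.prod_mul_distrib, Finset.prod_univ_sum, Fintype.piFinset_univ]
    simp only [Finset.prod_const, Finset.card_univ, Fintype.card_fin]
    congr 1
    refine Finset.sum_congr rfl fun C _ => ?_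
    rw [← prod_char_columns F C x, ← Finset.prod_mul_distrib]
    refine Finset.prod_congr rfl fun j _ => ?_
    rw [sub_eq_neg_add, AddChar.map_add_eq_mul]
  have hInt : ∀ C : Fin n → AddChar G ℂ, Integrable (fun x => (∏ j, C j (-A j)) *
      ∏ q : Fin n × Fin n, if q.1 < q.2 then entryRoot f C q ^ x q else 1)
      (matMeasure μ hμ n) := by
    intro C
    refine Integrable.const_mul (Integrable.of_bound
      (measurable_of_countable _).aestronglyMeasurable 1 ?_) _
    refine Filter.Eventually.of_forall fun x => ?_
    rw [norm_prod]
    refine (Finset.prod_eq_one fun q _ => ?_).le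
    split_ifs
    · simp [norm_entryRoot]
    · simp
  calc ((((matMeasure μ hμ n) E).toReal : ℝ) : ℂ)
      = ∫ x, E.indicator (fun _ => (1 : ℂ)) x ∂(matMeasure μ hμ n) := by
        rw [integral_indicator_const _ hEm]
        simp [Measure.real]
    _ = _ := by
        simp_rw [hpt]
        rw [integral_const_mul, integral_finsetSum _ fun C _ => hInt C]
        congr 1
        refine Finset.sum_congr rfl fun C _ => ?_
        rw [integral_const_mul]
        congr 1
        have := integral_fintype_prod_eq_prod (𝕜 := ℂ) (μ := fun _ : Fin n × Fin n => μ)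
          (fun q k => if q.1 < q.2 then entryRoot f C q ^ k else 1)
        refine this.trans (Finset.prod_congr rfl fun q _ => ?_)
        split_ifs
        · rfl
        · simp

lemma card_defect_le {G : Type} [AddCommGroup G] {n : ℕ} (f : Fin n → G)
    (C : Fin n → AddChar G ℂ) :
    (defect f C).card ≤ 2 * ((defect f C).filter fun q => q.1 < q.2).card := by
  classical
  set U := (defect f C).filter fun q => q.1 < q.2 with hU
  have hsub : defect f C ⊆ U ∪ U.image Prod.swap := by
    rintro ⟨i, j⟩ hq
    have hne : C j (f i) ≠ C i (f j) := (Finset.mem_filter.1 hq).2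
    rcases lt_trichotomy i j with h | h | h
    · exact Finset.mem_union_left _ (Finset.mem_filter.2 ⟨hq, h⟩)
    · exact absurd (by rw [h]) hne
    · refine Finset.mem_union_right _ (Finset.mem_image.2 ⟨(j, i), ?_, rfl⟩)
      exact Finset.mem_filter.2 ⟨Finset.mem_filter.2 ⟨Finset.mem_univ _, hne.symm⟩, h⟩
  have h1 := Finset.card_le_card hsub
  have h2 := Finset.card_union_le U (U.image Prod.swap)
  have h3 : (U.image Prod.swap).card ≤ U.card := Finset.card_image_le
  omega

/-- Only half of the defect counts, since each unordered pair of indices carries a single random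
entry. -/
lemma norm_coeff_le {μ : Measure ℤ} {a n : ℕ} {G : Type}
    [AddCommGroup G] [Fintype G] (hG : ∀ g : G, a • g = 0) {β : ℝ} (hβ : 0 < β)
    (hdecay : ∀ ζ : ℂ, ζ ^ a = 1 → ζ ≠ 1 → ‖∫ x : ℤ, ζ ^ x ∂μ‖ ≤ Real.exp (-β))
    (hμ : IsProbabilityMeasure μ) (f : Fin n → G) (C : Fin n → AddChar G ℂ) (A : Fin n → G) :
    ‖(∏ j, C j (-A j)) * ∏ q : Fin n × Fin n, if q.1 < q.2 then
        ∫ k : ℤ, entryRoot f C q ^ k ∂μ else 1‖ ≤ Real.exp (-(β / 2) * (defect f C).card) := by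
  classical
  rw [norm_mul, norm_prod, norm_prod]
  simp only [AddChar.norm_apply, Finset.prod_const_one, one_mul]
  set U := (defect f C).filter fun q => q.1 < q.2 with hU
  have hterm : ∀ q : Fin n × Fin n,
      ‖(if q.1 < q.2 then ∫ k : ℤ, entryRoot f C q ^ k ∂μ else 1)‖ ≤
        if q ∈ U then Real.exp (-β) else 1 := by
    intro q
    by_cases hq : q.1 < q.2
    · rw [if_pos hq]
      by_cases hz : entryRoot f C q = 1
      · have : q ∉ U := fun h => (Finset.mem_filter.1 (Finset.mem_filter.1 h).1).2
          ((entryRoot_eq_one_iff f C q).1 hz)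
        rw [if_neg this, hz]
        simp
      · have : q ∈ U := Finset.mem_filter.2 ⟨Finset.mem_filter.2 ⟨Finset.mem_univ _,
          fun h => hz ((entryRoot_eq_one_iff f C q).2 h)⟩, hq⟩
        rw [if_pos this]
        exact hdecay _ (entryRoot_pow hG f C q) hz
    · have : q ∉ U := fun h => hq (Finset.mem_filter.1 h).2
      rw [if_neg hq, if_neg this]
      simp
  refine (Finset.prod_le_prod (fun _ _ => norm_nonneg _) fun q _ => hterm q).trans ?_
  rw [Finset.prod_ite, Finset.prod_const_one, mul_one, Finset.prod_const, ← Real.exp_nat_mul,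
    Finset.filter_mem_eq_inter, Finset.univ_inter]
  refine Real.exp_le_exp.2 ?_
  have h : ((defect f C).card : ℝ) ≤ 2 * U.card := by exact_mod_cast card_defect_le f C
  nlinarith

lemma coeff_of_special {μ : Measure ℤ} (hμ : IsProbabilityMeasure μ) {n : ℕ} {G : Type}
    [AddCommGroup G] {f : Fin n → G} {C : Fin n → AddChar G ℂ}
    (hC : IsSpecial f C) :
    (∏ j, C j (-(0 : G))) * (∏ q : Fin n × Fin n, if q.1 < q.2 then
        ∫ k : ℤ, entryRoot f C q ^ k ∂μ else 1) = 1 := by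
  have : ∀ q : Fin n × Fin n, entryRoot f C q = 1 := fun q =>
    (entryRoot_eq_one_iff f C q).2 (hC q.1 q.2)
  simp [this]

/-! ### Constants -/

lemma numeric_bound {g β δ : ℝ} (hg : 1 ≤ g) (hβ : 0 < β) (hδ : 0 < δ) (s : ℝ) (hs : 0 ≤ s) :
    ∃ c : ℝ, 0 < c ∧ ∃ K : ℝ, 0 ≤ K ∧ ∀ n : ℕ,
      g ^ n * Real.exp (-β * (δ * n / (2 * g ^ 2)) ^ 2) +
        s * ((1 + g * Real.exp (-β * (δ * n / 2))) ^ n - 1) ≤ K * Real.exp (-c * n) := by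
  have hg0 : 0 < g := by linarith
  -- half of the decay rate is spent on absorbing a factor `n`
  set c : ℝ := β * δ / 4 with hc
  have hc0 : 0 < c := by positivity
  set κ : ℝ := β * (δ / (2 * g ^ 2)) ^ 2 with hκ
  have hκ0 : 0 < κ := by positivity
  set M : ℝ := g / c with hM
  have hM0 : 0 < M := by positivity
  refine ⟨c, hc0, Real.exp ((Real.log g + c) ^ 2 / (4 * κ)) + s * (M * Real.exp M),
    by positivity, fun n => ?_⟩
  rw [add_mul]
  refine add_le_add ?_ ?_
  · have h1 : g ^ n = Real.exp (n * Real.log g) := by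
      rw [Real.exp_nat_mul, Real.exp_log hg0]
    rw [h1, ← Real.exp_add, ← Real.exp_add]
    refine Real.exp_le_exp.2 ?_
    have h2 : -β * (δ * n / (2 * g ^ 2)) ^ 2 = -(κ * n ^ 2) := by rw [hκ]; ring
    rw [h2]
    have h3 : (Real.log g + c) * n - κ * n ^ 2 ≤ (Real.log g + c) ^ 2 / (4 * κ) := by
      rw [le_div_iff₀ (by positivity)]
      nlinarith [sq_nonneg (2 * κ * n - (Real.log g + c))]
    linarith
  · rw [mul_assoc]
    refine mul_le_mul_of_nonneg_left ?_ hs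
    set x : ℝ := g * Real.exp (-β * (δ * n / 2)) with hx
    have hx0 : 0 ≤ x := by positivity
    have hnx : n * x ≤ M * Real.exp (-c * n) := by
      have h1 : Real.exp (-β * (δ * n / 2)) = Real.exp (-c * n) * Real.exp (-c * n) := by
        rw [← Real.exp_add]; congr 1; rw [hc]; ring
      have h2 : c * n * Real.exp (-c * n) ≤ 1 := by
        have h3 : c * n ≤ Real.exp (c * n) := by
          linarith [Real.add_one_le_exp (c * n)]
        calc c * n * Real.exp (-c * n) ≤ Real.exp (c * n) * Real.exp (-c * n) := by gcongr
          _ = 1 := by rw [← Real.exp_add]; simp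
      calc n * x = M * Real.exp (-c * n) * (c * n * Real.exp (-c * n)) := by
            rw [hx, h1, hM]; field_simp
        _ ≤ M * Real.exp (-c * n) * 1 := by gcongr
        _ = _ := mul_one _
    have hnM : n * x ≤ M := by
      refine hnx.trans (mul_le_of_le_one_right hM0.le ?_)
      rw [Real.exp_le_one_iff]
      have : 0 ≤ c * n := by positivity
      linarith
    have hpow : (1 + x) ^ n ≤ Real.exp (n * x) := by
      rw [Real.exp_nat_mul]
      have := Real.add_one_le_exp x
      gcongr
      linarith
    have hexp : Real.exp (n * x) - 1 ≤ n * x * Real.exp (n * x) := by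
      have h1 := Real.one_sub_le_exp_neg (n * x)
      have h2 : Real.exp (-(n * x)) * Real.exp (n * x) = 1 := by rw [← Real.exp_add]; simp
      nlinarith [Real.exp_pos (n * x)]
    calc (1 + x) ^ n - 1 ≤ n * x * Real.exp (n * x) := by linarith
      _ ≤ M * Real.exp (-c * n) * Real.exp M := by gcongr
      _ = _ := by ring

/-! ### Conclusion -/

theorem code_column_probability (α : ℝ) (hα : 0 < α) (a : ℕ) (ha : 0 < a)
    (G : Type) [AddCommGroup G] [Fintype G] (hG : ∀ g : G, a • g = 0)
    (δ : ℝ) (hδ : 0 < δ) :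
    ∃ c : ℝ, 0 < c ∧ ∃ K : ℝ,
      ∀ (μ : Measure ℤ) (hμ : IsProbabilityMeasure μ), IsBalanced α μ →
      ∀ (n : ℕ) (F : (Fin n → ZMod a) →+ G), IsCode a F (δ * n) →
        (|((matMeasure μ hμ n)
              {x | ∀ j, F (fun i => ((skewMatrix n x i j : ℤ) : ZMod a)) = 0}).toReal
            - (Nat.card (symSq G) : ℝ) * ((Fintype.card G : ℝ))⁻¹ ^ n|
          ≤ K * Real.exp (-c * n) * ((Fintype.card G : ℝ))⁻¹ ^ n) ∧
        ∀ A : Fin n → G,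
          ((matMeasure μ hμ n)
              {x | ∀ j, F (fun i => ((skewMatrix n x i j : ℤ) : ZMod a)) = A j}).toReal
            ≤ K * ((Fintype.card G : ℝ))⁻¹ ^ n := by
  classical
  obtain ⟨β, hβ, hdecay⟩ := exists_decay α hα a ha
  have hG1 : (1 : ℝ) ≤ Fintype.card G := by exact_mod_cast Fintype.card_pos
  have hG0 : (0 : ℝ) < Fintype.card G := by linarith
  obtain ⟨c, hc, K, hK, hbound⟩ := numeric_bound (β := β / 2) hG1 (by positivity) hδ
    (Nat.card (symSq G) : ℝ) (Nat.cast_nonneg _)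
  set s : ℝ := (Nat.card (symSq G) : ℝ) with hs
  have hs0 : 0 ≤ s := Nat.cast_nonneg _
  refine ⟨c, hc, K + s + 1, fun μ hμ hbal n F hF => ?_⟩
  have hP : IsProbabilityMeasure (matMeasure μ hμ n) := by
    unfold matMeasure; infer_instance
  rcases Nat.eq_zero_or_pos n with rfl | hn
  · -- for `n = 0` the code may fail to be surjective, but both bounds hold trivially
    have hle : ∀ E : Set (Fin 0 × Fin 0 → ℤ), ((matMeasure μ hμ 0) E).toReal ≤ 1 := fun E =>
      measureReal_le_one
    refine ⟨?_, fun A => ?_⟩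
    · simp only [Nat.cast_zero, mul_zero, Real.exp_zero, mul_one, pow_zero]
      rw [abs_le]
      constructor
      · linarith [ENNReal.toReal_nonneg (a := (matMeasure μ hμ 0)
          {x | ∀ j, F (fun i => ((skewMatrix 0 x i j : ℤ) : ZMod a)) = 0})]
      · linarith [hle {x | ∀ j, F (fun i => ((skewMatrix 0 x i j : ℤ) : ZMod a)) = 0}]
    · rw [pow_zero, mul_one]
      linarith [hle {x | ∀ j, F (fun i => ((skewMatrix 0 x i j : ℤ) : ZMod a)) = A j}]
  have hw : 0 < δ * n := by positivity
  set f : Fin n → G := fun i => F (Pi.single i 1) with hf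
  have hgen : Generates f (δ * n) := generates_of_isCode ha hF
  set S : Finset (Fin n → AddChar G ℂ) := Finset.univ.filter fun C => IsSpecial f C with hS
  have hSmem : ∀ C, C ∈ S ↔ IsSpecial f C := fun C => by simp [hS]
  have hScard : (S.card : ℝ) = s := by
    rw [hs, ← card_special f]
    · rw [Nat.card_eq_fintype_card, Fintype.card_subtype]
    · have := hgen ∅ (by simpa using hw)
      simpa using this
  have hsum := sum_nonspecial_le hw hgen (β := β / 2) (by positivity) S hSmem
  rw [hScard] at hsum
  have htail := hsum.trans (hbound n)
  set T : (Fin n → G) → (Fin n → AddChar G ℂ) → ℂ := fun A C => (∏ j, C j (-A j)) *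
    ∏ q : Fin n × Fin n, if q.1 < q.2 then ∫ k : ℤ, entryRoot f C q ^ k ∂μ else 1 with hT
  have hTle : ∀ A C, ‖T A C‖ ≤ Real.exp (-(β / 2) * (defect f C).card) := fun A C =>
    norm_coeff_le hG hβ (hdecay μ hμ hbal) hμ f C A
  have hTtail : ∀ A, ‖∑ C ∈ Sᶜ, T A C‖ ≤ K * Real.exp (-c * n) := fun A =>
    (norm_sum_le _ _).trans ((Finset.sum_le_sum fun C _ => hTle A C).trans htail)
  have hKe : K * Real.exp (-c * n) ≤ (K + s + 1) * Real.exp (-c * n) := by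
    gcongr
    linarith
  have hpow0 : (0 : ℝ) ≤ ((Fintype.card G : ℝ))⁻¹ ^ n := by positivity
  have hnormpow : ‖((Fintype.card G : ℂ))⁻¹ ^ n‖ = ((Fintype.card G : ℝ))⁻¹ ^ n := by
    simp
  refine ⟨?_, fun A => ?_⟩
  · have h0 := prob_eq_sum μ hμ F (fun _ => (0 : G))
    set P := ((matMeasure μ hμ n)
      {x | ∀ j, F (fun i => ((skewMatrix n x i j : ℤ) : ZMod a)) = 0}).toReal with hPdef
    have h1 : ((P - s * ((Fintype.card G : ℝ))⁻¹ ^ n : ℝ) : ℂ) =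
        ((Fintype.card G : ℂ))⁻¹ ^ n * ∑ C ∈ Sᶜ, T (fun _ => 0) C := by
      have h2 : ∑ C ∈ S, T (fun _ => 0) C = (s : ℂ) := by
        rw [← hScard, Finset.sum_congr rfl fun C hC =>
          (coeff_of_special hμ ((hSmem C).1 hC) : T (fun _ => 0) C = 1)]
        simp
      have h3 : (P : ℂ) = ((Fintype.card G : ℂ))⁻¹ ^ n * ∑ C, T (fun _ => 0) C := h0
      rw [← Finset.sum_add_sum_compl S, h2] at h3
      push_cast
      rw [h3]
      ring
    rw [← Real.norm_eq_abs, ← Complex.norm_real, h1, norm_mul, hnormpow, mul_comm]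
    exact mul_le_mul_of_nonneg_right ((hTtail _).trans hKe) hpow0
  · have h0 := prob_eq_sum μ hμ F A
    set P := ((matMeasure μ hμ n)
      {x | ∀ j, F (fun i => ((skewMatrix n x i j : ℤ) : ZMod a)) = A j}).toReal with hPdef
    have h3 : (P : ℂ) = ((Fintype.card G : ℂ))⁻¹ ^ n * ∑ C, T A C := h0
    have h4 : ‖∑ C ∈ S, T A C‖ ≤ s := by
      refine (norm_sum_le _ _).trans ((Finset.sum_le_sum fun C _ => (hTle A C).trans
        (?_ : _ ≤ (1 : ℝ))).trans ?_)
      · rw [Real.exp_le_one_iff]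
        have : 0 ≤ β / 2 * ((defect f C).card : ℝ) := by positivity
        linarith
      · simp [hScard]
    have h5 : Real.exp (-c * n) ≤ 1 := by
      rw [Real.exp_le_one_iff]
      have : 0 ≤ c * n := by positivity
      linarith
    have h6 : ‖∑ C, T A C‖ ≤ K + s + 1 := by
      rw [← Finset.sum_add_sum_compl S]
      refine (norm_add_le _ _).trans ?_
      have h7 := (hTtail A).trans (mul_le_of_le_one_right hK h5)
      linarith
    calc P ≤ ‖(P : ℂ)‖ := by rw [Complex.norm_real]; exact le_abs_self P
      _ = ((Fintype.card G : ℝ))⁻¹ ^ n * ‖∑ C, T A C‖ := by rw [h3, norm_mul, hnormpow]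
      _ ≤ _ := by
        rw [mul_comm]
        exact mul_le_mul_of_nonneg_right h6 hpow0
end
end
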